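/- There exist constants θ, γ ∈ (0, 1/2) and c ≥ 1 with the following property. Let Q ⊂ ℝ² be open and let h ≥ 0 be a weak solution of v∂ₓh − ∂_vvh = 0 in Q. Then for every R ∈ (0,2] and every (x₀,v₀) ∈ ℝ² such that {x ∈ ℝ : |x − x₀ − v₀t| < R³ for some t ∈ (−R², 0]} × (v₀−R, v₀+R) ⊂ Q, one has ess sup over A_γ × (v₀−θR, v₀+θR) of h ≤ c · ess inf over A₀ × (v₀−θR, v₀+θR) of h, where for s ∈ {0, γ} the set A_s is defined by A_s := {x ∈ ℝ : |x − x₀ − v₀(t − R²s)| < (θR)³ for some t ∈ (−(θR)², 0]}. -/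

import Mathlib

/-!
The Harnack inequality is proved by comparison with the explicit Kolmogorov kernel.

Testing the two weak identities with `ψ` and `∂ᵥψ` eliminates `hv`, so `h` solves the equation in
the sense of distributions (`weak_combine`). In kinetic coordinates of scale `R` centred at a point
`p`, in which a time variable transports the centre along its free trajectory, a stationary solution
becomes a solution of the time-dependent Kolmogorov equation, whose formal adjoint is
`Lop = ∂ₜ + v∂ₓ + ∂ᵥᵥ` (`lift_eq`). The kernel `Ker` is annihilated by `Lop` for `t < 0`, and
switching it off smoothly near its pole gives `uk ε` with `Lop (uk ε) = -eta ε`, where `eta ε` is an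
approximate point mass.

* Testing with a cutoff times `uk ε` bounds the regularised value at the pole by the integral of the
  lift over the past cube `Br` (`upper`).
* Testing with `Fc ((2 + t) * uk ε)`, where `Fc` is convex and vanishes for small arguments, bounds
  it from below by the integral over the box `Nb`, centred at time distance `2⁻¹⁰` before the
  pole (`lower`). The test function has support in `Box`, since superlevel sets of the kernel are
  compact up to the pole, and the factor `2 + t` supplies a strictly positive source on `Nb`.
* The solution does not depend on time, so a time shift compares the two integrals when the poles
  run through the two blocks of the statement (`compare`).

As `ε → 0` the source `eta ε` concentrates at the pole (`limit`), so the resulting bound passes to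
weighted averages of `h` (`avg_le`) and, by Lebesgue differentiation, to its values almost
everywhere (`pointwise_le`). The constants are `θ = 2⁻²⁴` and `γ = 2⁻¹⁰`.
-/

noncomputable section

open MeasureTheory Set Filter
open scoped ENNReal

/-- The one-dimensional phase space, with points `p = (x, v)`. -/
abbrev P2 : Type := ℝ × ℝ

/-- `hv` is the weak derivative of `h` in the second (velocity) variable on `D`. -/
def IsWeakVDeriv (D : Set P2) (h hv : P2 → ℝ) : Prop :=
  ∀ ψ : P2 → ℝ, ContDiff ℝ ((⊤ : ℕ∞) : WithTop ℕ∞) ψ → HasCompactSupport ψ →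
    tsupport ψ ⊆ D →
    (∫ p in D, h p * fderiv ℝ ψ p ((0:ℝ), (1:ℝ))) = -∫ p in D, hv p * ψ p

/-- Weak solution of `v ∂ₓ h − ∂ᵥᵥ h = 0` in an (open) set `Q` (interior notion, no
boundary condition). -/
def IsWeakSolOpen (Q : Set P2) (h hv : P2 → ℝ) : Prop :=
  LocallyIntegrableOn (fun p => h p ^ 2) Q ∧
  LocallyIntegrableOn (fun p => hv p ^ 2) Q ∧
  IsWeakVDeriv Q h hv ∧
  ∀ ψ : P2 → ℝ, ContDiff ℝ ((⊤ : ℕ∞) : WithTop ℕ∞) ψ → HasCompactSupport ψ →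
    tsupport ψ ⊆ Q →
    (-∫ p in Q, h p * (p.2 * fderiv ℝ ψ p ((1:ℝ), (0:ℝ))))
        + (∫ p in Q, hv p * fderiv ℝ ψ p ((0:ℝ), (1:ℝ))) = 0

/-- The slanted block `A_s` in the space variable. -/
def Aslant (θ R x₀ v₀ s : ℝ) : Set ℝ :=
  {x : ℝ | ∃ t ∈ Set.Ioc (-(θ * R) ^ 2) (0:ℝ), |x - x₀ - v₀ * (t - R ^ 2 * s)| < (θ * R) ^ 3}

/-! ### The equation in the sense of distributions -/

/-- Testing the two weak identities with `ψ` and `∂ᵥψ` eliminates `hv`. -/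
lemma weak_combine {Q : Set P2} {h hv : P2 → ℝ} (hs : IsWeakSolOpen Q h hv) {ψ : P2 → ℝ}
    (h1 : ContDiff ℝ ((⊤ : ℕ∞) : WithTop ℕ∞) ψ) (h2 : HasCompactSupport ψ)
    (h3 : tsupport ψ ⊆ Q) :
    (∫ p in Q, h p * (p.2 * fderiv ℝ ψ p ((1:ℝ), (0:ℝ))))
      + ∫ p in Q, h p * fderiv ℝ (fun q => fderiv ℝ ψ q ((0:ℝ), (1:ℝ))) p ((0:ℝ), (1:ℝ)) = 0 := by
  obtain ⟨-, -, hw, he⟩ := hs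
  have hd : ContDiff ℝ ((⊤ : ℕ∞) : WithTop ℕ∞) (fun q => fderiv ℝ ψ q ((0:ℝ), (1:ℝ))) :=
    (h1.fderiv_right (by simp)).clm_apply contDiff_const
  have hc : HasCompactSupport (fun q => fderiv ℝ ψ q ((0:ℝ), (1:ℝ))) :=
    h2.fderiv_apply (𝕜 := ℝ) _
  have ht : tsupport (fun q => fderiv ℝ ψ q ((0:ℝ), (1:ℝ))) ⊆ Q :=
    (tsupport_fderiv_apply_subset ℝ _).trans h3
  have e1 := he ψ h1 h2 h3
  have e2 := hw _ hd hc ht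
  rw [e2]
  linarith

/-- The distributional equation for the restriction of `h` to a compact set `K ⊆ Q` containing the
support of the test function. -/
lemma dist_eq {Q K : Set P2} {h hv : P2 → ℝ} (hs : IsWeakSolOpen Q h hv) (hQ : IsOpen Q)
    (hK : IsCompact K) (hKQ : K ⊆ Q) (hi : IntegrableOn h K) {ψ : P2 → ℝ}
    (h1 : ContDiff ℝ ((⊤ : ℕ∞) : WithTop ℕ∞) ψ) (h2 : HasCompactSupport ψ)
    (h3 : tsupport ψ ⊆ K) :
    ∫ q, K.indicator h q * (q.2 * fderiv ℝ ψ q ((1:ℝ), (0:ℝ))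
      + fderiv ℝ (fun q => fderiv ℝ ψ q ((0:ℝ), (1:ℝ))) q ((0:ℝ), (1:ℝ))) = 0 := by
  have hd : ContDiff ℝ ((⊤ : ℕ∞) : WithTop ℕ∞) (fun q => fderiv ℝ ψ q ((0:ℝ), (1:ℝ))) :=
    (h1.fderiv_right (by simp)).clm_apply contDiff_const
  have hc : HasCompactSupport (fun q => fderiv ℝ ψ q ((0:ℝ), (1:ℝ))) :=
    h2.fderiv_apply (𝕜 := ℝ) _
  have ht : tsupport (fun q => fderiv ℝ ψ q ((0:ℝ), (1:ℝ))) ⊆ K :=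
    (tsupport_fderiv_apply_subset ℝ _).trans h3
  set X : P2 → ℝ := fun q => q.2 * fderiv ℝ ψ q ((1:ℝ), (0:ℝ)) with hX
  set Y : P2 → ℝ := fun q => fderiv ℝ (fun q => fderiv ℝ ψ q ((0:ℝ), (1:ℝ))) q ((0:ℝ), (1:ℝ))
    with hY
  have hXc : Continuous X := by
    have : Continuous fun q => fderiv ℝ ψ q ((1:ℝ), (0:ℝ)) :=
      ((h1.fderiv_right (m := 0) (by simp)).clm_apply contDiff_const).continuous
    fun_prop
  have hYc : Continuous Y :=
    ((hd.fderiv_right (m := 0) (by simp)).clm_apply contDiff_const).continuous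
  have hX0 : ∀ q ∉ K, X q = 0 := by
    intro q hq
    have : fderiv ℝ ψ q ((1:ℝ), (0:ℝ)) = 0 :=
      image_eq_zero_of_notMem_tsupport
        (f := fun q => fderiv ℝ ψ q ((1:ℝ), (0:ℝ)))
        (fun hh => hq (h3 (tsupport_fderiv_apply_subset ℝ _ hh)))
    simp [hX, this]
  have hY0 : ∀ q ∉ K, Y q = 0 := by
    intro q hq
    exact image_eq_zero_of_notMem_tsupport
        (f := fun q => fderiv ℝ (fun q => fderiv ℝ ψ q ((0:ℝ), (1:ℝ))) q ((0:ℝ), (1:ℝ)))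
        (fun hh => hq (ht (tsupport_fderiv_apply_subset ℝ _ hh)))
  have key : ∀ Z : P2 → ℝ, Continuous Z → (∀ q ∉ K, Z q = 0) →
      Integrable (fun q => K.indicator h q * Z q) ∧
      ∫ q in Q, h q * Z q = ∫ q, K.indicator h q * Z q := by
    intro Z hZc hZ0
    have e : (fun q => K.indicator h q * Z q) = K.indicator (fun q => h q * Z q) := by
      ext q
      by_cases hq : q ∈ K <;> simp [hq]
    have e' : (fun q => h q * Z q) = K.indicator (fun q => h q * Z q) := by
      ext q
      by_cases hq : q ∈ K <;> simp [hq, hZ0]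
    constructor
    · rw [e, integrable_indicator_iff hK.measurableSet]
      exact hi.mul_continuousOn hZc.continuousOn hK
    · rw [e, e', ← integral_indicator hQ.measurableSet, Set.indicator_indicator,
        Set.inter_eq_right.2 hKQ]
      simp [Set.indicator_indicator]
  have e := weak_combine hs h1 h2 (h3.trans hKQ)
  have kX := key X hXc hX0
  have kY := key Y hYc hY0
  have e1 : ∫ q in Q, h q * X q = ∫ q, K.indicator h q * X q := kX.2
  have e2 : ∫ q in Q, h q * Y q = ∫ q, K.indicator h q * Y q := kY.2
  have : (∫ q in Q, h q * X q) + ∫ q in Q, h q * Y q = 0 := e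
  rw [e1, e2, ← integral_add kX.1 kY.1] at this
  simpa [mul_add] using this

lemma aesm_of_sol {Q : Set P2} {h hv : P2 → ℝ} (hs : IsWeakSolOpen Q h hv) (hQ : IsOpen Q)
    (h0 : ∀ p ∈ Q, 0 ≤ h p) : AEStronglyMeasurable h (volume.restrict Q) := by
  have h1 := hs.1.aestronglyMeasurable
  have h2 : AEStronglyMeasurable (fun p => Real.sqrt (h p ^ 2)) (volume.restrict Q) :=
    Real.continuous_sqrt.comp_aestronglyMeasurable h1
  refine h2.congr ?_
  filter_upwards [ae_restrict_mem hQ.measurableSet] with p hp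
  exact Real.sqrt_sq (h0 p hp)

lemma integrableOn_of_sol {Q K : Set P2} {h hv : P2 → ℝ} (hs : IsWeakSolOpen Q h hv)
    (hQ : IsOpen Q) (h0 : ∀ p ∈ Q, 0 ≤ h p) (hK : IsCompact K) (hKQ : K ⊆ Q) :
    IntegrableOn h K := by
  have h1 : IntegrableOn (fun p => h p ^ 2) K := hs.1.integrableOn_compact_subset hKQ hK
  have h2 : IntegrableOn (fun p => h p ^ 2 + 1) K :=
    h1.add (integrableOn_const (hK.measure_lt_top.ne))
  refine Integrable.mono' h2 ((aesm_of_sol hs hQ h0).mono_measure (Measure.restrict_mono hKQ le_rfl)) ?_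
  filter_upwards with p
  rw [Real.norm_eq_abs, abs_le]
  constructor <;> nlinarith [sq_nonneg (h p - 1), sq_nonneg (h p + 1)]


/-! ### Lifting to the time-dependent Kolmogorov equation -/

/-- Points `(t, x, v)` of the time-dependent phase space. -/
abbrev P3 : Type := ℝ × ℝ × ℝ

/-- The formal adjoint `∂ₜ + v∂ₓ + ∂ᵥᵥ` of the Kolmogorov operator `-∂ₜ - v∂ₓ + ∂ᵥᵥ`. -/
def Lop (φ : P3 → ℝ) (z : P3) : ℝ :=
  fderiv ℝ φ z (1, 0, 0) + z.2.2 * fderiv ℝ φ z (0, 1, 0)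
    + fderiv ℝ (fun w => fderiv ℝ φ w (0, 0, 1)) z (0, 0, 1)

/-- Kinetic coordinates of scale `R` centred at `p`: the pair of a time `t` and a physical point `q`
is sent to `(t, x, v)` with `q = (p.1 + R² p.2 t + R³ x, p.2 + R v)`. -/
def Sig (R : ℝ) (p : P2) (z : P3) : P3 :=
  (z.1, (z.2.1 - p.1 - R ^ 2 * p.2 * z.1) / R ^ 3, (z.2.2 - p.2) / R)

/-- The integral against `k(t, x, v)` of the lift `(t, x, v) ↦ H(p.1 + R² p.2 t + R³ x, p.2 + R v)`
of `H`, written in the variables `(t, q)`, thus up to the constant Jacobian `R⁴`. -/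
def J (R : ℝ) (H : P2 → ℝ) (k : P3 → ℝ) (p : P2) : ℝ :=
  ∫ z : P3, H z.2 * k (Sig R p z)

/-- The box in kinetic coordinates that contains the supports of all test functions. -/
def Box : Set P3 := Icc (-(1/4)) 0 ×ˢ Icc (-(1/4)) (1/4) ×ˢ Icc (-(1/4)) (1/4)

/-- `p` is admissible for `K` when the box around `p` is mapped into `K`. -/
def Good (R : ℝ) (K : Set P2) (p : P2) : Prop := ∀ z : P3, Sig R p z ∈ Box → z.2 ∈ K

lemma sig_continuous (R : ℝ) (p : P2) : Continuous (Sig R p) := by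
  unfold Sig; fun_prop

lemma sig_contDiff (R : ℝ) (p : P2) {n : WithTop ℕ∞} : ContDiff ℝ n (Sig R p) := by
  unfold Sig
  simp only [div_eq_mul_inv]
  fun_prop

/-- `Sig R p` as a homeomorphism. -/
def sigHomeo (R : ℝ) (hR : 0 < R) (p : P2) : P3 ≃ₜ P3 where
  toFun := Sig R p
  invFun z := (z.1, p.1 + R ^ 2 * p.2 * z.1 + R ^ 3 * z.2.1, p.2 + R * z.2.2)
  left_inv z := by
    have := hR.ne'
    ext
    · simp [Sig]
    · simp [Sig]; field_simp; ring
    · simp [Sig]; field_simp; ring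
  right_inv z := by
    have := hR.ne'
    ext
    · simp [Sig]
    · simp [Sig]; field_simp; ring
    · simp [Sig]; field_simp
  continuous_toFun := sig_continuous R p
  continuous_invFun := by fun_prop

lemma sig_hasFDerivAt (R : ℝ) (p : P2) (z : P3) :
    ∃ A : P3 →L[ℝ] P3, HasFDerivAt (Sig R p) A z ∧
      ∀ w : P3, A w = (w.1, (w.2.1 - R ^ 2 * p.2 * w.1) / R ^ 3, w.2.2 / R) := by
  refine ⟨(ContinuousLinearMap.fst ℝ ℝ (ℝ × ℝ)).prod
    (((R ^ 3)⁻¹ • ((ContinuousLinearMap.fst ℝ ℝ ℝ).comp (ContinuousLinearMap.snd ℝ ℝ (ℝ × ℝ))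
      - (R ^ 2 * p.2) • ContinuousLinearMap.fst ℝ ℝ (ℝ × ℝ))).prod
    (R⁻¹ • (ContinuousLinearMap.snd ℝ ℝ ℝ).comp (ContinuousLinearMap.snd ℝ ℝ (ℝ × ℝ)))), ?_, ?_⟩
  · have h1 : HasFDerivAt (fun z : P3 => z.1) (ContinuousLinearMap.fst ℝ ℝ (ℝ × ℝ)) z :=
      hasFDerivAt_fst
    have h2 : HasFDerivAt (fun z : P3 => z.2.1) ((ContinuousLinearMap.fst ℝ ℝ ℝ).comp
        (ContinuousLinearMap.snd ℝ ℝ (ℝ × ℝ))) z := hasFDerivAt_fst.comp z hasFDerivAt_snd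
    have h3 : HasFDerivAt (fun z : P3 => z.2.2) ((ContinuousLinearMap.snd ℝ ℝ ℝ).comp
        (ContinuousLinearMap.snd ℝ ℝ (ℝ × ℝ))) z := hasFDerivAt_snd.comp z hasFDerivAt_snd
    have h4 := (((h2.sub_const p.1).sub (h1.const_mul (R ^ 2 * p.2))).const_mul ((R ^ 3)⁻¹))
    have h5 := ((h3.sub_const p.2).const_mul (R⁻¹))
    have := h1.prodMk (h4.prodMk h5)
    refine this.congr_of_eventuallyEq (Eventually.of_forall fun z => ?_)
    simp [Sig, div_eq_inv_mul]
  · intro w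
    simp [div_eq_inv_mul]

/-- The chain rule behind the lift: in the variables `(t, q)` the operator `Lop` becomes
`∂ₜ + R² (q.2 ∂ₓ + ∂ᵥᵥ)`. -/
lemma Lop_sig {R : ℝ} (hR : 0 < R) (p : P2) {φ : P3 → ℝ}
    (h1 : ContDiff ℝ ((⊤ : ℕ∞) : WithTop ℕ∞) φ) (z : P3) :
    Lop φ (Sig R p z) = fderiv ℝ (φ ∘ Sig R p) z (1, 0, 0)
      + R ^ 2 * (z.2.2 * fderiv ℝ (φ ∘ Sig R p) z (0, 1, 0)
        + fderiv ℝ (fun w => fderiv ℝ (φ ∘ Sig R p) w (0, 0, 1)) z (0, 0, 1)) := by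
  have hR' := hR.ne'
  have chain : ∀ (f : P3 → ℝ), Differentiable ℝ f → ∀ z w : P3,
      fderiv ℝ (f ∘ Sig R p) z w = fderiv ℝ f (Sig R p z)
        (w.1, (w.2.1 - R ^ 2 * p.2 * w.1) / R ^ 3, w.2.2 / R) := by
    intro f hf z w
    obtain ⟨A, hA, hA'⟩ := sig_hasFDerivAt R p z
    rw [((hf _).hasFDerivAt.comp z hA).fderiv]
    simp [hA']
  have hφ : Differentiable ℝ φ := h1.differentiable (by simp)
  have hd : ContDiff ℝ ((⊤ : ℕ∞) : WithTop ℕ∞) (fun q => fderiv ℝ φ q (0, 0, 1)) :=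
    (h1.fderiv_right (by simp)).clm_apply contDiff_const
  have e0 : ∀ a b c : ℝ, ∀ y : P3, ∀ f : P3 → ℝ, fderiv ℝ f y (a, b, c) =
      a * fderiv ℝ f y (1, 0, 0) + b * fderiv ℝ f y (0, 1, 0) + c * fderiv ℝ f y (0, 0, 1) := by
    intro a b c y f
    have : ((a, b, c) : P3) = a • ((1, 0, 0) : P3) + b • ((0, 1, 0) : P3)
      + c • ((0, 0, 1) : P3) := by simp
    rw [this, map_add, map_add, map_smul, map_smul, map_smul]
    simp
  have e1 : (fun w => fderiv ℝ (φ ∘ Sig R p) w (0, 0, 1)) =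
      fun w => R⁻¹ * ((fun q => fderiv ℝ φ q (0, 0, 1)) ∘ Sig R p) w := by
    ext w
    rw [chain φ hφ, e0]
    simp [div_eq_inv_mul]
  rw [e1, fderiv_const_mul]
  swap
  · exact (hd.differentiable (by simp) _).comp z ((sig_contDiff R p (n := 1)).differentiable (by simp) z)
  rw [_root_.smul_apply, chain _ (hd.differentiable (by simp)), chain φ hφ, chain φ hφ]
  rw [e0 _ _ _ _ (fun q => fderiv ℝ φ q (0, 0, 1)), e0 _ _ _ _ φ, e0 _ ((_ : ℝ) / R ^ 3) _ _ φ]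
  unfold Lop
  simp [Sig]
  field_simp
  ring

lemma J_integrable {R : ℝ} {H : P2 → ℝ} (hH : Integrable H) {k : P3 → ℝ} (hk : Measurable k)
    {C : ℝ} (hC : ∀ z, |k z| ≤ C) (hs : ∀ z, k z ≠ 0 → z ∈ Box) (p : P2) :
    Integrable (fun z : P3 => H z.2 * k (Sig R p z)) := by
  have h1 : Integrable (fun z : P3 => (Icc (-(1/4) : ℝ) 0).indicator (fun _ => C) z.1 * H z.2) :=
    Integrable.mul_prod ((integrable_indicator_iff measurableSet_Icc).2
      (integrableOn_const (by simp))) hH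
  refine h1.mono ?_ ?_
  · exact (hH.1.comp_snd).mul (hk.comp (sig_continuous R p).measurable).aestronglyMeasurable
  · refine Eventually.of_forall fun z => ?_
    by_cases hz : k (Sig R p z) = 0
    · rw [hz, mul_zero, norm_zero]
      exact norm_nonneg _
    · have h2 := (hs _ hz).1
      have h3 : z.1 ∈ Icc (-(1/4) : ℝ) 0 := h2
      have hC0 : 0 ≤ C := (abs_nonneg _).trans (hC z)
      rw [Set.indicator_of_mem h3, norm_mul, norm_mul, mul_comm, Real.norm_eq_abs, Real.norm_eq_abs C,
        abs_of_nonneg hC0]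
      exact mul_le_mul_of_nonneg_right (hC _) (norm_nonneg _)

/-- The lift of a stationary solution solves the Kolmogorov equation in the sense of
distributions. The `∂ₜ` part integrates to zero in `t` and the rest vanishes on each time slice. -/
lemma lift_eq {Q K : Set P2} {h hv : P2 → ℝ} (hs : IsWeakSolOpen Q h hv) (hQ : IsOpen Q)
    (hK : IsCompact K) (hKQ : K ⊆ Q) (hi : IntegrableOn h K) {R : ℝ} (hR : 0 < R) {p : P2}
    (hp : Good R K p) {φ : P3 → ℝ} (h1 : ContDiff ℝ ((⊤ : ℕ∞) : WithTop ℕ∞) φ)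
    (h2 : ∀ z, φ z ≠ 0 → z ∈ Box) :
    J R (K.indicator h) (Lop φ) p = 0 := by
  set H := K.indicator h with hHdef
  have hH : Integrable H := (integrable_indicator_iff hK.measurableSet).2 hi
  have hBoxc : IsCompact Box := isCompact_Icc.prod (isCompact_Icc.prod isCompact_Icc)
  have hφc : HasCompactSupport φ :=
    HasCompactSupport.intro hBoxc fun z hz => by
      by_contra hne
      exact hz (h2 z hne)
  set Φ : P3 → ℝ := φ ∘ Sig R p with hΦ
  have hΦs : ContDiff ℝ ((⊤ : ℕ∞) : WithTop ℕ∞) Φ := h1.comp (sig_contDiff R p)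
  have hΦc : HasCompactSupport Φ := hφc.comp_homeomorph (sigHomeo R hR p)
  have hd : ∀ {f : P3 → ℝ} (w : P3), ContDiff ℝ ((⊤ : ℕ∞) : WithTop ℕ∞) f →
      ContDiff ℝ ((⊤ : ℕ∞) : WithTop ℕ∞) (fun q => fderiv ℝ f q w) :=
    fun w hf => (hf.fderiv_right (by simp)).clm_apply contDiff_const
  -- a continuous compactly supported weight is integrable against the lift
  have hInt : ∀ X : P3 → ℝ, Continuous X → HasCompactSupport X →
      Integrable (fun z : P3 => H z.2 * X z) := by
    intro X hX hXc
    obtain ⟨C, hC⟩ := hXc.exists_bound_of_continuous hX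
    have hI : IsCompact (Prod.fst '' tsupport X) := hXc.isCompact.image continuous_fst
    have h1 : Integrable (fun z : P3 => (Prod.fst '' tsupport X).indicator (fun _ => C) z.1 * H z.2) :=
      Integrable.mul_prod ((integrable_indicator_iff hI.measurableSet).2
        (integrableOn_const hI.measure_lt_top.ne)) hH
    refine h1.mono (hH.1.comp_snd.mul hX.aestronglyMeasurable) (Eventually.of_forall fun z => ?_)
    by_cases hz : z ∈ tsupport X
    · have hC0 : 0 ≤ C := (norm_nonneg _).trans (hC z)
      rw [Set.indicator_of_mem (mem_image_of_mem _ hz), norm_mul, norm_mul, mul_comm,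
        Real.norm_eq_abs C, abs_of_nonneg hC0]
      exact mul_le_mul_of_nonneg_right (hC _) (norm_nonneg _)
    · rw [image_eq_zero_of_notMem_tsupport hz, mul_zero, norm_zero]
      exact norm_nonneg _
  have hT := hd (1, 0, 0) hΦs
  have hTc : HasCompactSupport (fun q => fderiv ℝ Φ q (1, 0, 0)) := hΦc.fderiv_apply (𝕜 := ℝ) _
  set Y : P3 → ℝ := fun z => z.2.2 * fderiv ℝ Φ z (0, 1, 0)
        + fderiv ℝ (fun w => fderiv ℝ Φ w (0, 0, 1)) z (0, 0, 1) with hY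
  have hYcont : Continuous Y := by
    have a := (hd (0, 1, 0) hΦs).continuous
    have b := (hd (0, 0, 1) (hd (0, 0, 1) hΦs)).continuous
    fun_prop
  have hYc : HasCompactSupport Y := by
    refine HasCompactSupport.add ?_ ?_
    · exact HasCompactSupport.mul_left (f := fun z : P3 => z.2.2) (hΦc.fderiv_apply (𝕜 := ℝ) _)
    · exact (hΦc.fderiv_apply (𝕜 := ℝ) _).fderiv_apply (𝕜 := ℝ) _
  have i1 := hInt _ hT.continuous hTc
  have i2 := hInt _ hYcont hYc
  have z1 : ∫ z : P3, H z.2 * fderiv ℝ Φ z (1, 0, 0) = 0 := by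
    rw [Measure.volume_eq_prod, integral_prod_symm _ i1]
    have : ∀ q : ℝ × ℝ, ∫ t : ℝ, H q * fderiv ℝ Φ (t, q) (1, 0, 0) = 0 := by
      intro q
      rw [integral_const_mul]
      have hder : ∀ t : ℝ, HasDerivAt (fun t => Φ (t, q)) (fderiv ℝ Φ (t, q) (1, 0, 0)) t := by
        intro t
        have a := (hΦs.differentiable (by simp) (t, q)).hasFDerivAt
        have b : HasDerivAt (fun t : ℝ => ((t, q) : P3)) ((1 : ℝ), (0 : ℝ × ℝ)) t :=
          (hasDerivAt_id t).prodMk (hasDerivAt_const t q)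
        exact HasFDerivAt.comp_hasDerivAt (l := Φ) t a b
      have emb : Topology.IsClosedEmbedding (fun t : ℝ => ((t, q) : P3)) :=
        Topology.IsClosedEmbedding.of_continuous_injective_isClosedMap (by fun_prop)
          (fun a b hab => (Prod.mk.inj hab).1) (isClosedMap_prodMk_right q)
      have c1 : HasCompactSupport (fun t => Φ (t, q)) := hΦc.comp_isClosedEmbedding emb
      have c2 : HasCompactSupport (fun t => fderiv ℝ Φ (t, q) (1, 0, 0)) :=
        hTc.comp_isClosedEmbedding emb
      rw [integral_eq_zero_of_hasDerivAt_of_integrable hder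
        ((hT.continuous.comp (by fun_prop)).integrable_of_hasCompactSupport c2)
        ((hΦs.continuous.comp (by fun_prop)).integrable_of_hasCompactSupport c1), mul_zero]
    simp only [this, integral_zero]
  have z2 : ∫ z : P3, H z.2 * Y z = 0 := by
    rw [Measure.volume_eq_prod, integral_prod _ i2]
    have : ∀ t : ℝ, ∫ q : ℝ × ℝ, H q * Y (t, q) = 0 := by
      intro t
      have slice : ∀ (f : P3 → ℝ), Differentiable ℝ f → ∀ (q w : ℝ × ℝ),
          fderiv ℝ (fun q => f (t, q)) q w = fderiv ℝ f (t, q) (0, w) := by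
        intro f hf q w
        have b : HasFDerivAt (fun q : ℝ × ℝ => ((t, q) : P3))
            ((0 : ℝ × ℝ →L[ℝ] ℝ).prod (ContinuousLinearMap.id ℝ (ℝ × ℝ))) q :=
          (hasFDerivAt_const t q).prodMk (hasFDerivAt_id q)
        have := ((hf (t, q)).hasFDerivAt.comp q b).fderiv
        change fderiv ℝ (f ∘ fun q => (t, q)) q w = _
        rw [this]
        simp
      have dΦ : Differentiable ℝ Φ := hΦs.differentiable (by simp)
      have sK : tsupport (fun q : P2 => Φ (t, q)) ⊆ K := by
        refine closure_minimal (fun q hq => ?_) hK.isClosed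
        exact hp (t, q) (h2 _ hq)
      have := dist_eq hs hQ hK hKQ hi (ψ := fun q => Φ (t, q)) (hΦs.comp (by fun_prop))
        (hK.of_isClosed_subset (isClosed_tsupport _) sK) sK
      rw [← this]
      refine integral_congr_ae (Eventually.of_forall fun q => ?_)
      have e : (fun q : ℝ × ℝ => fderiv ℝ (fun q => Φ (t, q)) q (0, 1)) =
          fun q => (fun w => fderiv ℝ Φ w (0, 0, 1)) (t, q) := by
        ext q
        exact slice Φ dΦ q _
      simp only [e]
      rw [slice Φ dΦ, slice _ ((hd (0, 0, 1) hΦs).differentiable (by simp))]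
    simp only [this, integral_zero]
  unfold J
  have : ∀ z : P3, H z.2 * Lop φ (Sig R p z) =
      H z.2 * fderiv ℝ Φ z (1, 0, 0) + R ^ 2 * (H z.2 * Y z) := by
    intro z
    rw [Lop_sig hR p h1 z]
    ring
  simp only [this]
  rw [integral_add i1 (i2.const_mul _), integral_const_mul, z1, z2]
  simp


/-! ### The Kolmogorov kernel -/

/-- The (unnormalised) fundamental solution of `Lop` with pole at the origin, for `t < 0`. -/
def Ker (z : P3) : ℝ :=
  (z.1 ^ 2)⁻¹ * Real.exp (z.2.2 ^ 2 / z.1 - 3 * z.2.2 * z.2.1 / z.1 ^ 2 + 3 * z.2.1 ^ 2 / z.1 ^ 3)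

/-- The kernel switched off smoothly for `t > -ε`. -/
def uk (ε : ℝ) (z : P3) : ℝ := Real.smoothTransition (-z.1 / ε - 1) * Ker z

/-- The source of `uk ε`: an approximate point mass at the origin as `ε → 0`. -/
def eta (ε : ℝ) (z : P3) : ℝ := ε⁻¹ * deriv Real.smoothTransition (-z.1 / ε - 1) * Ker z

lemma Ker_nonneg (z : P3) : 0 ≤ Ker z := by unfold Ker; positivity

lemma sT_mono : Monotone Real.smoothTransition := by
  intro x y hxy
  have gm : Monotone expNegInvGlue := expNegInvGlue.monotone
  have a1 := gm hxy
  have a2 := gm (show 1 - y ≤ 1 - x by linarith)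
  unfold Real.smoothTransition
  rw [div_le_div_iff₀ (Real.smoothTransition.pos_denom x) (Real.smoothTransition.pos_denom y)]
  nlinarith [mul_le_mul a1 a2 (expNegInvGlue.nonneg _) (expNegInvGlue.nonneg _)]

lemma sT_deriv_nonneg (x : ℝ) : 0 ≤ deriv Real.smoothTransition x := sT_mono.deriv_nonneg

lemma sT_contDiff {n : ℕ∞} : ContDiff ℝ n Real.smoothTransition := Real.smoothTransition.contDiff

lemma sT_deriv_cont : Continuous (deriv Real.smoothTransition) :=
  (Real.smoothTransition.contDiff (n := 1)).continuous_deriv (by simp)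

lemma sT_deriv_zero {x : ℝ} (hx : x ≤ 0) : deriv Real.smoothTransition x = 0 := by
  have h : IsMinOn Real.smoothTransition univ x := by
    intro y _
    simp [Real.smoothTransition.zero_of_nonpos hx, Real.smoothTransition.nonneg]
  exact (h.isLocalMin (by simp)).deriv_eq_zero

lemma sT_deriv_zero' {x : ℝ} (hx : 1 ≤ x) : deriv Real.smoothTransition x = 0 := by
  have h : IsMaxOn Real.smoothTransition univ x := by
    intro y _
    simp [Real.smoothTransition.one_of_one_le hx, Real.smoothTransition.le_one]
  exact (h.isLocalMax (by simp)).deriv_eq_zero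

lemma eta_nonneg {ε : ℝ} (hε : 0 < ε) (z : P3) : 0 ≤ eta ε z := by
  unfold eta
  have := sT_deriv_nonneg (-z.1 / ε - 1)
  have := Ker_nonneg z
  positivity

lemma uk_nonneg (ε : ℝ) (z : P3) : 0 ≤ uk ε z :=
  mul_nonneg (Real.smoothTransition.nonneg _) (Ker_nonneg z)

lemma uk_le_Ker (ε : ℝ) (z : P3) : uk ε z ≤ Ker z :=
  mul_le_of_le_one_left (Ker_nonneg z) (Real.smoothTransition.le_one _)

lemma arg_nonpos {ε t : ℝ} (hε : 0 < ε) (ht : -ε ≤ t) : -t / ε - 1 ≤ 0 := by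
  rw [sub_nonpos, div_le_one hε]; linarith

lemma uk_zero {ε : ℝ} (hε : 0 < ε) {z : P3} (hz : -ε ≤ z.1) : uk ε z = 0 := by
  unfold uk
  rw [Real.smoothTransition.zero_of_nonpos (arg_nonpos hε hz), zero_mul]

lemma eta_zero {ε : ℝ} (hε : 0 < ε) {z : P3} (hz : -ε ≤ z.1) : eta ε z = 0 := by
  unfold eta
  rw [sT_deriv_zero (arg_nonpos hε hz)]; ring

lemma Ker_contDiffAt {z : P3} (hz : z.1 ≠ 0) {n : WithTop ℕ∞} : ContDiffAt ℝ n Ker z := by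
  have h2 : z.1 ^ 2 ≠ 0 := pow_ne_zero _ hz
  have h3 : z.1 ^ 3 ≠ 0 := pow_ne_zero _ hz
  unfold Ker
  fun_prop (disch := assumption)

lemma uk_eventually_zero {ε : ℝ} (hε : 0 < ε) {z : P3} (hz : -ε < z.1) :
    uk ε =ᶠ[nhds z] fun _ => 0 := by
  have : ∀ᶠ w : P3 in nhds z, -ε < w.1 := continuous_fst.continuousAt.eventually (lt_mem_nhds hz)
  filter_upwards [this] with w hw
  exact uk_zero hε hw.le

lemma uk_contDiff {ε : ℝ} (hε : 0 < ε) : ContDiff ℝ ((⊤ : ℕ∞) : WithTop ℕ∞) (uk ε) := by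
  rw [contDiff_iff_contDiffAt]
  intro z
  by_cases hz : z.1 < 0
  · have h1 : ContDiff ℝ ((⊤ : ℕ∞) : WithTop ℕ∞) (fun z : P3 => -z.1 / ε - 1) := by
      simp only [div_eq_mul_inv]; fun_prop
    exact ((sT_contDiff (n := ⊤)).comp h1).contDiffAt.mul (Ker_contDiffAt hz.ne)
  · exact contDiffAt_const.congr_of_eventuallyEq (uk_eventually_zero hε (by linarith))

lemma line_t {f : P3 → ℝ} {z : P3} (hf : DifferentiableAt ℝ f z) {d : ℝ}
    (hd : HasDerivAt (fun s => f (s, z.2)) d z.1) : fderiv ℝ f z (1, 0, 0) = d := by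
  have b : HasDerivAt (fun t : ℝ => ((t, z.2) : P3)) ((1 : ℝ), (0 : ℝ × ℝ)) z.1 :=
    (hasDerivAt_id z.1).prodMk (hasDerivAt_const z.1 z.2)
  exact (HasFDerivAt.comp_hasDerivAt (l := f) z.1 hf.hasFDerivAt b).unique hd

lemma line_x {f : P3 → ℝ} {z : P3} (hf : DifferentiableAt ℝ f z) {d : ℝ}
    (hd : HasDerivAt (fun s => f (z.1, s, z.2.2)) d z.2.1) : fderiv ℝ f z (0, 1, 0) = d := by
  have b : HasDerivAt (fun s : ℝ => ((z.1, s, z.2.2) : P3)) ((0 : ℝ), (1 : ℝ), (0 : ℝ)) z.2.1 :=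
    (hasDerivAt_const _ _).prodMk ((hasDerivAt_id _).prodMk (hasDerivAt_const _ _))
  exact (HasFDerivAt.comp_hasDerivAt (l := f) z.2.1 hf.hasFDerivAt b).unique hd

lemma line_v {f : P3 → ℝ} {z : P3} (hf : DifferentiableAt ℝ f z) {d : ℝ}
    (hd : HasDerivAt (fun s => f (z.1, z.2.1, s)) d z.2.2) : fderiv ℝ f z (0, 0, 1) = d := by
  have b : HasDerivAt (fun s : ℝ => ((z.1, z.2.1, s) : P3)) ((0 : ℝ), (0 : ℝ), (1 : ℝ)) z.2.2 :=
    (hasDerivAt_const _ _).prodMk ((hasDerivAt_const _ _).prodMk (hasDerivAt_id _))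
  exact (HasFDerivAt.comp_hasDerivAt (l := f) z.2.2 hf.hasFDerivAt b).unique hd

/-- The exponent of `Ker`. -/
def ex (z : P3) : ℝ :=
  z.2.2 ^ 2 / z.1 - 3 * z.2.2 * z.2.1 / z.1 ^ 2 + 3 * z.2.1 ^ 2 / z.1 ^ 3

lemma Ker_eq (z : P3) : Ker z = (z.1 ^ 2)⁻¹ * Real.exp (ex z) := rfl

/-- The logarithmic `v`-derivative of `Ker`. -/
def bv (z : P3) : ℝ := 2 * z.2.2 / z.1 - 3 * z.2.1 / z.1 ^ 2

lemma ex_v (t x v : ℝ) : HasDerivAt (fun s => ex (t, x, s)) (bv (t, x, v)) v := by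
  have h := (((hasDerivAt_id v).pow 2).div_const t).sub
    ((((hasDerivAt_id v).const_mul 3).mul_const x).div_const (t ^ 2)) |>.add_const (3 * x ^ 2 / t ^ 3)
  refine h.congr_deriv ?_
  simp [bv]

lemma ex_x (t x v : ℝ) : HasDerivAt (fun s => ex (t, s, v)) (-3 * v / t ^ 2 + 6 * x / t ^ 3) x := by
  have h := ((((hasDerivAt_id x).const_mul (3 * v)).div_const (t ^ 2)).const_sub (v ^ 2 / t)).add
    ((((hasDerivAt_id x).pow 2).const_mul 3).div_const (t ^ 3))
  refine h.congr_deriv ?_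
  simp
  ring

lemma ex_t {t : ℝ} (ht : t ≠ 0) (x v : ℝ) : HasDerivAt (fun s => ex (s, x, v))
    (-v ^ 2 / t ^ 2 + 6 * v * x / t ^ 3 - 9 * x ^ 2 / t ^ 4) t := by
  have h := (((hasDerivAt_const t (v ^ 2)).div (hasDerivAt_id t) ht).sub
    ((hasDerivAt_const t (3 * v * x)).div ((hasDerivAt_id t).pow 2) (pow_ne_zero 2 ht))).add
    ((hasDerivAt_const t (3 * x ^ 2)).div ((hasDerivAt_id t).pow 3) (pow_ne_zero 3 ht))
  refine h.congr_deriv ?_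
  simp
  field_simp
  ring

lemma Ker_v (t x v : ℝ) :
    HasDerivAt (fun s => Ker (t, x, s)) (Ker (t, x, v) * bv (t, x, v)) v := by
  have h := ((ex_v t x v).exp).const_mul ((t ^ 2)⁻¹)
  refine h.congr_deriv ?_
  simp [Ker_eq]
  ring

lemma Ker_x (t x v : ℝ) : HasDerivAt (fun s => Ker (t, s, v))
    (Ker (t, x, v) * (-3 * v / t ^ 2 + 6 * x / t ^ 3)) x := by
  have h := ((ex_x t x v).exp).const_mul ((t ^ 2)⁻¹)
  refine h.congr_deriv ?_
  simp [Ker_eq]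
  ring

lemma Ker_t {t : ℝ} (ht : t ≠ 0) (x v : ℝ) : HasDerivAt (fun s => Ker (s, x, v))
    (Ker (t, x, v) * (-2 / t + (-v ^ 2 / t ^ 2 + 6 * v * x / t ^ 3 - 9 * x ^ 2 / t ^ 4))) t := by
  have h := (((hasDerivAt_id t).pow 2).inv (pow_ne_zero 2 ht)).mul (ex_t ht x v).exp
  refine h.congr_deriv ?_
  simp [Ker_eq]
  field_simp

lemma uk_dv {ε : ℝ} (hε : 0 < ε) (z : P3) :
    fderiv ℝ (uk ε) z (0, 0, 1) = uk ε z * bv z := by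
  apply line_v ((uk_contDiff hε).differentiable (by simp) z)
  have h := (Ker_v z.1 z.2.1 z.2.2).const_mul (Real.smoothTransition (-z.1 / ε - 1))
  refine h.congr_deriv ?_
  simp [uk]
  ring

/-- The Kolmogorov equation for the kernel, with the source created by the switching. -/
lemma uk_Lop {ε : ℝ} (hε : 0 < ε) (z : P3) : Lop (uk ε) z = - eta ε z := by
  have hs := uk_contDiff hε
  have hd := hs.differentiable (by simp)
  have hd2 : Differentiable ℝ (fun w => fderiv ℝ (uk ε) w (0, 0, 1)) :=
    ContDiff.differentiable (n := ((⊤ : ℕ∞) : WithTop ℕ∞))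
      ((hs.fderiv_right (by simp)).clm_apply contDiff_const) (by simp)
  have e0 : (fun w => fderiv ℝ (uk ε) w (0, 0, 1)) = fun w => uk ε w * bv w := by
    ext w; exact uk_dv hε w
  by_cases hz : z.1 < 0
  · have a1 : fderiv ℝ (uk ε) z (1, 0, 0) =
        deriv Real.smoothTransition (-z.1 / ε - 1) * (-1 / ε) * Ker z
        + uk ε z * (-2 / z.1 + (-z.2.2 ^ 2 / z.1 ^ 2 + 6 * z.2.2 * z.2.1 / z.1 ^ 3
          - 9 * z.2.1 ^ 2 / z.1 ^ 4)) := by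
      apply line_t (hd z)
      have hl : HasDerivAt (fun s : ℝ => -s / ε - 1) (-1 / ε) z.1 :=
        ((hasDerivAt_id z.1).neg.div_const ε).sub_const 1
      have hT : HasDerivAt (fun s : ℝ => Real.smoothTransition (-s / ε - 1))
          (deriv Real.smoothTransition (-z.1 / ε - 1) * (-1 / ε)) z.1 :=
        HasDerivAt.comp (h₂ := Real.smoothTransition) z.1
          (((sT_contDiff (n := 1)).differentiable (by simp) _).hasDerivAt) hl
      have h := hT.mul (Ker_t hz.ne z.2.1 z.2.2)
      refine h.congr_deriv ?_
      simp [uk]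
      ring
    have a2 : fderiv ℝ (uk ε) z (0, 1, 0) =
        uk ε z * (-3 * z.2.2 / z.1 ^ 2 + 6 * z.2.1 / z.1 ^ 3) := by
      apply line_x (hd z)
      have h := (Ker_x z.1 z.2.1 z.2.2).const_mul (Real.smoothTransition (-z.1 / ε - 1))
      refine h.congr_deriv ?_
      simp [uk]
      ring
    have a3 : fderiv ℝ (fun w => uk ε w * bv w) z (0, 0, 1) =
        uk ε z * bv z * bv z + uk ε z * (2 / z.1) := by
      apply line_v (e0 ▸ hd2 z)
      have h := (Ker_v z.1 z.2.1 z.2.2).const_mul (Real.smoothTransition (-z.1 / ε - 1))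
      have hb : HasDerivAt (fun s => bv (z.1, z.2.1, s)) (2 / z.1) z.2.2 := by
        have := (((hasDerivAt_id z.2.2).const_mul 2).div_const z.1).sub_const
          (3 * z.2.1 / z.1 ^ 2)
        simpa [bv] using this
      refine (h.mul hb).congr_deriv ?_
      simp only [uk, Prod.mk.eta]
      ring
    unfold Lop
    rw [e0, a1, a2, a3]
    unfold eta bv
    have := hz.ne
    field_simp
    ring
  · have hz' : -ε < z.1 := by linarith
    have h1 := uk_eventually_zero hε hz'
    have h2 : (fun w => fderiv ℝ (uk ε) w (0, 0, 1)) =ᶠ[nhds z] fun _ => 0 := by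
      rw [e0]
      filter_upwards [h1] with w hw
      rw [hw, zero_mul]
    unfold Lop
    rw [h1.fderiv_eq, h2.fderiv_eq, eta_zero hε hz'.le]
    simp

lemma ex_le_v {z : P3} (hz : z.1 < 0) : z.2.2 ^ 2 / (-4 * z.1) ≤ -ex z := by
  have : -ex z - z.2.2 ^ 2 / (-4 * z.1) = 3 * (z.2.1 / z.1 - z.2.2 / 2) ^ 2 / (-z.1) := by
    unfold ex
    have := hz.ne
    field_simp
    ring
  have h2 : 0 ≤ 3 * (z.2.1 / z.1 - z.2.2 / 2) ^ 2 / (-z.1) :=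
    div_nonneg (by positivity) (by linarith)
  linarith

lemma ex_le_x {z : P3} (hz : z.1 < 0) : 3 * z.2.1 ^ 2 / (-4 * z.1 ^ 3) ≤ -ex z := by
  have : -ex z - 3 * z.2.1 ^ 2 / (-4 * z.1 ^ 3) =
      (z.2.2 - 3 * z.2.1 / (2 * z.1)) ^ 2 / (-z.1) := by
    unfold ex
    have := hz.ne
    field_simp
    ring
  have h2 : 0 ≤ (z.2.2 - 3 * z.2.1 / (2 * z.1)) ^ 2 / (-z.1) :=
    div_nonneg (by positivity) (by linarith)
  linarith

lemma ex_nonpos {z : P3} (hz : z.1 < 0) : 0 ≤ -ex z :=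
  (div_nonneg (by positivity) (by linarith)).trans (ex_le_v hz)

lemma Ker_measurable : Measurable Ker := by unfold Ker; fun_prop

lemma eta_measurable (ε : ℝ) : Measurable (eta ε) := by
  have h1 := Ker_measurable
  have h2 := sT_deriv_cont.measurable
  unfold eta
  fun_prop

lemma Lop_continuous {φ : P3 → ℝ} (h : ContDiff ℝ ((⊤ : ℕ∞) : WithTop ℕ∞) φ) :
    Continuous (Lop φ) := by
  have hd : ∀ {f : P3 → ℝ} (w : P3), ContDiff ℝ ((⊤ : ℕ∞) : WithTop ℕ∞) f →
      ContDiff ℝ ((⊤ : ℕ∞) : WithTop ℕ∞) (fun q => fderiv ℝ f q w) :=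
    fun w hf => (hf.fderiv_right (by simp)).clm_apply contDiff_const
  have a := (hd (1, 0, 0) h).continuous
  have b := (hd (0, 1, 0) h).continuous
  have c := (hd (0, 0, 1) (hd (0, 0, 1) h)).continuous
  unfold Lop
  fun_prop

lemma eta_continuous {ε : ℝ} (hε : 0 < ε) : Continuous (eta ε) := by
  have : eta ε = fun z => - Lop (uk ε) z := by
    ext z; rw [uk_Lop hε]; ring
  rw [this]
  exact (Lop_continuous (uk_contDiff hε)).neg


/-! ### Calculus of the operator and of the integrals `J` -/

lemma contDiff_dir {f : P3 → ℝ} (w : P3) (hf : ContDiff ℝ ((⊤ : ℕ∞) : WithTop ℕ∞) f) :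
    ContDiff ℝ ((⊤ : ℕ∞) : WithTop ℕ∞) (fun q => fderiv ℝ f q w) :=
  (hf.fderiv_right (by simp)).clm_apply contDiff_const

lemma Lop_mul {f g : P3 → ℝ} (hf : ContDiff ℝ ((⊤ : ℕ∞) : WithTop ℕ∞) f)
    (hg : ContDiff ℝ ((⊤ : ℕ∞) : WithTop ℕ∞) g) (z : P3) :
    Lop (fun z => f z * g z) z = f z * Lop g z + g z * Lop f z
      + 2 * (fderiv ℝ f z (0, 0, 1) * fderiv ℝ g z (0, 0, 1)) := by
  have df := hf.differentiable (by simp)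
  have dg := hg.differentiable (by simp)
  have dfv := (contDiff_dir (0, 0, 1) hf).differentiable (by simp)
  have dgv := (contDiff_dir (0, 0, 1) hg).differentiable (by simp)
  have e : ∀ y w, fderiv ℝ (fun z => f z * g z) y w = f y * fderiv ℝ g y w + g y * fderiv ℝ f y w := by
    intro y w
    rw [fderiv_fun_mul (df y) (dg y)]
    simp
  unfold Lop
  simp only [e]
  rw [fderiv_fun_add ((df z).fun_mul (dgv z)) ((dg z).fun_mul (dfv z)), fderiv_fun_mul (df z) (dgv z),
    fderiv_fun_mul (dg z) (dfv z)]
  simp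
  ring

lemma Lop_comp {F : ℝ → ℝ} {U : P3 → ℝ} (hF : ContDiff ℝ ((⊤ : ℕ∞) : WithTop ℕ∞) F)
    (hU : ContDiff ℝ ((⊤ : ℕ∞) : WithTop ℕ∞) U) (z : P3) :
    Lop (fun z => F (U z)) z = deriv F (U z) * Lop U z
      + deriv (deriv F) (U z) * (fderiv ℝ U z (0, 0, 1)) ^ 2 := by
  have dU := hU.differentiable (by simp)
  have dUv := (contDiff_dir (0, 0, 1) hU).differentiable (by simp)
  have dF := hF.differentiable (by simp)
  have hF' : ContDiff ℝ ((⊤ : ℕ∞) : WithTop ℕ∞) (deriv F) := (contDiff_infty_iff_deriv.1 hF).2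
  have dF' := hF'.differentiable (by simp)
  have e : ∀ G : ℝ → ℝ, Differentiable ℝ G → ∀ y w, fderiv ℝ (fun z => G (U z)) y w
      = deriv G (U y) * fderiv ℝ U y w := by
    intro G hG y w
    have := ((hG (U y)).hasDerivAt.comp_hasFDerivAt y (dU y).hasFDerivAt).fderiv
    change fderiv ℝ (G ∘ U) y w = _
    rw [this]
    simp
  unfold Lop
  simp only [e F dF]
  have dFU : DifferentiableAt ℝ (fun y => deriv F (U y)) z := (dF' _).comp z (dU z)
  rw [fderiv_fun_mul dFU (dUv z)]
  simp only [_root_.add_apply, _root_.smul_apply, smul_eq_mul]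
  have e2 : fderiv ℝ (fun y => deriv F (U y)) z (0, 0, 1) = _ := e _ dF' z (0, 0, 1)
  rw [e2]
  ring

/-- Bounded measurable kernels supported in `Box`. -/
def Adm (k : P3 → ℝ) : Prop :=
  Measurable k ∧ (∃ C, ∀ z, |k z| ≤ C) ∧ ∀ z, k z ≠ 0 → z ∈ Box

lemma Adm.integrable {k : P3 → ℝ} (hk : Adm k) {H : P2 → ℝ} (hH : Integrable H) (R : ℝ) (p : P2) :
    Integrable (fun z : P3 => H z.2 * k (Sig R p z)) := by
  obtain ⟨h1, ⟨C, h2⟩, h3⟩ := hk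
  exact J_integrable hH h1 h2 h3 p

lemma J_mono {k l : P3 → ℝ} (hk : Adm k) (hl : Adm l) {H : P2 → ℝ} (hH : Integrable H)
    (h0 : ∀ q, 0 ≤ H q) (R : ℝ) (p : P2) (hkl : ∀ z, k z ≤ l z) : J R H k p ≤ J R H l p :=
  integral_mono (hk.integrable hH R p) (hl.integrable hH R p)
    fun _ => mul_le_mul_of_nonneg_left (hkl _) (h0 _)

lemma J_sub {k l : P3 → ℝ} (hk : Adm k) (hl : Adm l) {H : P2 → ℝ} (hH : Integrable H)
    (R : ℝ) (p : P2) : J R H (fun z => k z - l z) p = J R H k p - J R H l p := by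
  unfold J
  rw [← integral_sub (hk.integrable hH R p) (hl.integrable hH R p)]
  simp only [mul_sub]

lemma J_const_mul {k : P3 → ℝ} {H : P2 → ℝ} (R : ℝ) (p : P2) (c : ℝ) :
    J R H (fun z => c * k z) p = c * J R H k p := by
  unfold J
  rw [← integral_const_mul]
  congr 1
  ext z
  ring

lemma Adm.sub {k l : P3 → ℝ} (hk : Adm k) (hl : Adm l) : Adm (fun z => k z - l z) := by
  obtain ⟨h1, ⟨C, h2⟩, h3⟩ := hk
  obtain ⟨g1, ⟨D, g2⟩, g3⟩ := hl
  refine ⟨h1.sub g1, ⟨C + D, fun z => ?_⟩, fun z hz => ?_⟩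
  · exact (abs_sub _ _).trans (add_le_add (h2 z) (g2 z))
  · by_contra hb
    have a : k z = 0 := by by_contra h; exact hb (h3 z h)
    have b : l z = 0 := by by_contra h; exact hb (g3 z h)
    exact hz (by simp [a, b])

lemma Adm.const_mul {k : P3 → ℝ} (hk : Adm k) (c : ℝ) : Adm (fun z => c * k z) := by
  obtain ⟨h1, ⟨C, h2⟩, h3⟩ := hk
  refine ⟨h1.const_mul c, ⟨|c| * C, fun z => ?_⟩, fun z hz => h3 z (right_ne_zero_of_mul hz)⟩
  rw [abs_mul]
  exact mul_le_mul_of_nonneg_left (h2 z) (abs_nonneg _)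

lemma isCompact_Box : IsCompact Box := isCompact_Icc.prod (isCompact_Icc.prod isCompact_Icc)

lemma Adm.of_continuous {k : P3 → ℝ} (hk : Continuous k) (hs : ∀ z, k z ≠ 0 → z ∈ Box) : Adm k := by
  have hc : HasCompactSupport k := HasCompactSupport.intro isCompact_Box fun z hz => by
    by_contra hne
    exact hz (hs z hne)
  obtain ⟨C, hC⟩ := hc.exists_bound_of_continuous hk
  exact ⟨hk.measurable, ⟨C, hC⟩, hs⟩

lemma Adm.indicator {S : Set P3} (hS : MeasurableSet S) (hSB : S ⊆ Box) :
    Adm (S.indicator fun _ => 1) := by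
  refine ⟨measurable_const.indicator hS, ⟨1, fun z => ?_⟩, fun z hz => ?_⟩
  · by_cases hz : z ∈ S <;> simp [hz]
  · by_contra hb
    exact hz (Set.indicator_of_notMem (fun h => hb (hSB h)) _)

lemma Adm.mul_eta {ε : ℝ} (hε : 0 < ε) {k : P3 → ℝ} (hk : Adm k) : Adm (fun z => k z * eta ε z) := by
  obtain ⟨h1, ⟨C, h2⟩, h3⟩ := hk
  obtain ⟨D, hD⟩ := isCompact_Box.exists_bound_of_continuousOn (eta_continuous hε).continuousOn
  refine ⟨h1.mul (eta_measurable ε), ⟨C * D, fun z => ?_⟩, fun z hz => h3 z (left_ne_zero_of_mul hz)⟩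
  have hC0 : 0 ≤ C := (abs_nonneg _).trans (h2 z)
  have hD0 : 0 ≤ D := (norm_nonneg _).trans (hD 0 ⟨⟨by norm_num, le_rfl⟩, ⟨by norm_num, by norm_num⟩,
    ⟨by norm_num, by norm_num⟩⟩)
  by_cases hz : k z = 0
  · simp [hz]; positivity
  · rw [abs_mul]
    exact mul_le_mul (h2 z) (hD z (h3 z hz)) (abs_nonneg _) hC0

lemma Lop_support {φ : P3 → ℝ} (h : ∀ z, φ z ≠ 0 → z ∈ Box) (z : P3) (hz : Lop φ z ≠ 0) :
    z ∈ Box := by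
  by_contra hb
  have h1 : φ =ᶠ[nhds z] fun _ => 0 := by
    filter_upwards [isCompact_Box.isClosed.isOpen_compl.mem_nhds hb] with w hw
    by_contra hne
    exact hw (h w hne)
  have h2 : (fun w => fderiv ℝ φ w (0, 0, 1)) =ᶠ[nhds z] fun _ => 0 := by
    filter_upwards [h1.eventuallyEq_nhds] with w hw
    rw [hw.fderiv_eq]
    simp
  apply hz
  unfold Lop
  rw [h1.fderiv_eq, h2.fderiv_eq]
  simp


/-! ### Local boundedness from above -/

/-- The scale of the cutoff, which also serves as `θ`. -/
def r0 : ℝ := 1 / 2 ^ 24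

lemma r0_pos : 0 < r0 := by unfold r0; positivity

/-- A smooth cutoff equal to `1` near the origin and supported at scale `r0`. -/
def cut : ContDiffBump (0 : P3) := ⟨r0 / 2, r0, half_pos r0_pos, half_lt_self r0_pos⟩

/-- The past half of the cube of half-width `r0` around the origin. -/
def Br : Set P3 := Icc (-r0) 0 ×ˢ Icc (-r0) r0 ×ˢ Icc (-r0) r0

lemma Br_subset : Br ⊆ Box := by
  have h : r0 ≤ 1 / 4 := by unfold r0; norm_num
  rintro z ⟨⟨a, b⟩, ⟨c, d⟩, ⟨e, f⟩⟩
  exact ⟨⟨by linarith, b⟩, ⟨by linarith, by linarith⟩, ⟨by linarith, by linarith⟩⟩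

lemma Br_measurable : MeasurableSet Br :=
  measurableSet_Icc.prod (measurableSet_Icc.prod measurableSet_Icc)

lemma norm_P3_le {z : P3} {r : ℝ} : ‖z‖ ≤ r ↔ |z.1| ≤ r ∧ |z.2.1| ≤ r ∧ |z.2.2| ≤ r := by
  simp [Prod.norm_def]

lemma norm_P3_lt {z : P3} {r : ℝ} : ‖z‖ < r ↔ |z.1| < r ∧ |z.2.1| < r ∧ |z.2.2| < r := by
  simp [Prod.norm_def]

lemma mem_Br {z : P3} (h : ‖z‖ ≤ r0) (ht : z.1 < 0) : z ∈ Br := by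
  obtain ⟨a, b, c⟩ := norm_P3_le.1 h
  exact ⟨⟨(abs_le.1 a).1, ht.le⟩, abs_le.1 b, abs_le.1 c⟩

/-- Away from its pole the kernel is bounded together with its `v`-derivative. -/
lemma Ker_bound {ρ : ℝ} (hρ : 0 < ρ) : ∃ C, 0 ≤ C ∧ ∀ z : P3, z.1 < 0 → ρ ≤ ‖z‖ → ‖z‖ ≤ 1 →
    Ker z * (1 + |bv z|) ≤ C := by
  refine ⟨6 * (ρ ^ 4)⁻¹ + 6 * 24 * (4 / ρ ^ 2) ^ 4, by positivity, fun z hz h1 h2 => ?_⟩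
  obtain ⟨t, x, v⟩ := z
  obtain ⟨τ, rfl⟩ : ∃ τ, t = -τ := ⟨-t, by simp⟩
  have hτ : 0 < τ := by simpa using hz
  obtain ⟨a, b, c⟩ := norm_P3_le.1 h2
  simp only [abs_neg] at a b c
  rw [abs_of_pos hτ] at a
  have hb : 1 + |bv (-τ, x, v)| ≤ 6 * (τ ^ 2)⁻¹ := by
    have e1 : |bv (-τ, x, v)| ≤ 2 * |v| / τ + 3 * |x| / τ ^ 2 := by
      unfold bv
      refine (abs_sub _ _).trans (le_of_eq ?_)
      simp [abs_div, abs_mul, abs_of_pos hτ]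
    have e2 : 2 * |v| / τ ≤ 2 * (τ ^ 2)⁻¹ := by
      rw [← div_eq_mul_inv, div_le_div_iff₀ hτ (by positivity)]
      nlinarith [mul_nonneg hτ.le hτ.le, abs_nonneg v, mul_le_mul c a hτ.le (by norm_num)]
    have e3 : 3 * |x| / τ ^ 2 ≤ 3 * (τ ^ 2)⁻¹ := by
      rw [← div_eq_mul_inv]
      gcongr
      linarith
    have e4 : 1 ≤ (τ ^ 2)⁻¹ := by
      rw [one_le_inv₀ (by positivity)]
      exact pow_le_one₀ hτ.le a
    linarith
  have hK : Ker (-τ, x, v) * (1 + |bv (-τ, x, v)|) ≤ 6 * (τ ^ 4)⁻¹ * Real.exp (ex (-τ, x, v)) := by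
    refine (mul_le_mul_of_nonneg_left hb (Ker_nonneg _)).trans (le_of_eq ?_)
    rw [Ker_eq]
    simp only [neg_sq]
    field_simp
  refine hK.trans ?_
  have hexp := ex_nonpos (z := (-τ, x, v)) (by simpa using hτ)
  -- for `τ ≥ ρ` the prefactor is bounded; for `τ < ρ` the point has `|x| ≥ ρ` or `|v| ≥ ρ`, and the
  -- Gaussian factor `exp (-ρ² / (4τ))` beats the power `τ⁻⁴`
  by_cases hc : ρ ≤ τ
  · have e1 : Real.exp (ex (-τ, x, v)) ≤ 1 := Real.exp_le_one_iff.2 (by linarith)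
    have e2 : (τ ^ 4)⁻¹ ≤ (ρ ^ 4)⁻¹ := by gcongr
    have e3 : 6 * (τ ^ 4)⁻¹ * Real.exp (ex (-τ, x, v)) ≤ 6 * (τ ^ 4)⁻¹ :=
      mul_le_of_le_one_right (by positivity) e1
    have e4 : 0 ≤ 6 * 24 * (4 / ρ ^ 2) ^ 4 := by positivity
    linarith
  · have hc' := not_le.1 hc
    have hy : ρ ^ 2 / (4 * τ) ≤ -ex (-τ, x, v) := by
      have hor : ρ ≤ |x| ∨ ρ ≤ |v| := by
        by_contra hn
        push Not at hn
        have : ‖((-τ, x, v) : P3)‖ < ρ := norm_P3_lt.2 ⟨by simpa [abs_of_pos hτ] using hc', hn.1, hn.2⟩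
        linarith
      rcases hor with h | h
      · refine le_trans ?_ (ex_le_x (z := (-τ, x, v)) (by simpa using hτ))
        have : ρ ^ 2 ≤ x ^ 2 := by rw [← sq_abs x]; gcongr
        simp only
        rw [show -4 * (-τ) ^ 3 = 4 * τ ^ 3 by ring, div_le_div_iff₀ (by positivity) (by positivity)]
        have t2 : τ ^ 2 ≤ 1 := pow_le_one₀ hτ.le a
        have : ρ ^ 2 * τ ^ 2 ≤ x ^ 2 * 1 := mul_le_mul this t2 (by positivity) (by positivity)
        nlinarith [mul_le_mul_of_nonneg_right this hτ.le, mul_nonneg (sq_nonneg x) hτ.le]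
      · refine le_trans ?_ (ex_le_v (z := (-τ, x, v)) (by simpa using hτ))
        have : ρ ^ 2 ≤ v ^ 2 := by rw [← sq_abs v]; gcongr
        simp only
        rw [show -4 * (-τ) = 4 * τ by ring]
        gcongr
    set y := ρ ^ 2 / (4 * τ) with hydef
    have hy0 : 0 < y := by positivity
    have h4 : y ^ 4 / 24 ≤ Real.exp y := by
      have := Real.pow_div_factorial_le_exp y hy0.le 4
      simpa [Nat.factorial] using this
    have e1 : Real.exp (ex (-τ, x, v)) ≤ 24 / y ^ 4 := by
      calc Real.exp (ex (-τ, x, v)) ≤ Real.exp (-y) := Real.exp_le_exp.2 (by linarith)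
        _ = (Real.exp y)⁻¹ := Real.exp_neg y
        _ ≤ (y ^ 4 / 24)⁻¹ := by gcongr
        _ = 24 / y ^ 4 := by rw [inv_div]
    have e2 : 6 * (τ ^ 4)⁻¹ * (24 / y ^ 4) = 6 * 24 * (4 / ρ ^ 2) ^ 4 := by
      rw [hydef]; field_simp
    have e3 : 6 * (τ ^ 4)⁻¹ * Real.exp (ex (-τ, x, v)) ≤ 6 * (τ ^ 4)⁻¹ * (24 / y ^ 4) := by gcongr
    have e4 : 0 ≤ 6 * (ρ ^ 4)⁻¹ := by positivity
    linarith

/-- The lift of `H` around `p` is annihilated by `Lop` of test functions supported in `Box`. -/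
def Sol (R : ℝ) (H : P2 → ℝ) (p : P2) : Prop :=
  ∀ φ : P3 → ℝ, ContDiff ℝ ((⊤ : ℕ∞) : WithTop ℕ∞) φ → (∀ z, φ z ≠ 0 → z ∈ Box) →
    J R H (Lop φ) p = 0

/-- The part of the cutoff on the past side of the pole. -/
def cutm (z : P3) : ℝ := if z.1 < 0 then cut z else 0

lemma cut_zero {z : P3} (h : r0 ≤ ‖z‖) : cut z = 0 :=
  cut.zero_of_le_dist (by rw [dist_zero_right]; exact h)

lemma cutm_adm : Adm cutm := by
  refine ⟨Measurable.ite (measurableSet_lt measurable_fst measurable_const)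
    cut.continuous.measurable measurable_const, ⟨1, fun z => ?_⟩, fun z hz => ?_⟩
  · unfold cutm
    split_ifs
    · rw [abs_of_nonneg cut.nonneg]; exact cut.le_one
    · simp
  · unfold cutm at hz
    split_ifs at hz with h
    · refine Br_subset (mem_Br ?_ h)
      by_contra hn
      exact hz (cut_zero (not_le.1 hn).le)
    · exact absurd rfl hz

/-- Values of the lift at its pole are controlled by the average over the past cube `Br`: test with
the kernel times a cutoff; the error lives where the cutoff varies, away from the pole. -/
lemma upper : ∃ C, 0 ≤ C ∧ ∀ (R : ℝ) (H : P2 → ℝ), Integrable H → (∀ q, 0 ≤ H q) → ∀ p, Sol R H p →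
    ∀ ε, 0 < ε → J R H (fun z => cutm z * eta ε z) p ≤ C * J R H (Br.indicator fun _ => 1) p := by
  obtain ⟨C1, hC1, hK⟩ := Ker_bound (half_pos r0_pos)
  have hcs : ContDiff ℝ ((⊤ : ℕ∞) : WithTop ℕ∞) cut := cut.contDiff
  have hcc : HasCompactSupport cut := cut.hasCompactSupport
  have ev0 : ∀ z : P3, r0 < ‖z‖ → (cut : P3 → ℝ) =ᶠ[nhds z] fun _ => 0 := by
    intro z hz
    filter_upwards [continuous_norm.continuousAt.eventually (lt_mem_nhds hz)] with w hw
    exact cut_zero hw.le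
  have ev1 : ∀ z : P3, ‖z‖ < r0 / 2 → (cut : P3 → ℝ) =ᶠ[nhds z] fun _ => 1 := by
    intro z hz
    filter_upwards [continuous_norm.continuousAt.eventually (gt_mem_nhds hz)] with w hw
    exact cut.one_of_mem_closedBall (by simpa [cut] using hw.le)
  have evL : ∀ z : P3, ∀ c : ℝ, (cut : P3 → ℝ) =ᶠ[nhds z] (fun _ => c) →
      Lop cut z = 0 ∧ fderiv ℝ cut z (0, 0, 1) = 0 := by
    intro z c h1
    have h2 : (fun w => fderiv ℝ cut w (0, 0, 1)) =ᶠ[nhds z] fun _ => 0 := by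
      filter_upwards [h1.eventuallyEq_nhds] with w hw
      rw [hw.fderiv_eq]
      simp
    constructor
    · unfold Lop
      rw [h1.fderiv_eq, h2.fderiv_eq]
      simp
    · exact h2.eq_of_nhds
  obtain ⟨C2, hC2⟩ : ∃ C2, ∀ z, |Lop cut z| ≤ C2 := by
    have : HasCompactSupport (Lop cut) := by
      refine HasCompactSupport.intro (isCompact_closedBall (0 : P3) r0) fun z hz => ?_
      exact (evL z 0 (ev0 z (by simpa using hz))).1
    exact this.exists_bound_of_continuous (Lop_continuous hcs)
  obtain ⟨C3, hC3⟩ : ∃ C3, ∀ z, |fderiv ℝ cut z (0, 0, 1)| ≤ C3 :=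
    (hcc.fderiv_apply (𝕜 := ℝ) (0, 0, 1)).exists_bound_of_continuous (contDiff_dir _ hcs).continuous
  have hC20 : 0 ≤ C2 := (abs_nonneg _).trans (hC2 0)
  have hC30 : 0 ≤ C3 := (abs_nonneg _).trans (hC3 0)
  refine ⟨(C2 + 2 * C3) * C1, by positivity, fun R H hH h0 p hp ε hε => ?_⟩
  set φ : P3 → ℝ := fun z => cut z * uk ε z with hφ
  have hφs : ContDiff ℝ ((⊤ : ℕ∞) : WithTop ℕ∞) φ := hcs.mul (uk_contDiff hε)
  have hφB : ∀ z, φ z ≠ 0 → z ∈ Box := by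
    intro z hz
    refine Br_subset (mem_Br ?_ ?_)
    · by_contra hn
      exact left_ne_zero_of_mul hz (cut_zero (not_le.1 hn).le)
    · by_contra hn
      exact right_ne_zero_of_mul hz (uk_zero hε (by linarith))
  have hce : Adm (fun z => cutm z * eta ε z) := cutm_adm.mul_eta hε
  have hBr := Adm.indicator Br_measurable Br_subset
  have e := hp φ hφs hφB
  have hL : Adm (Lop φ) := Adm.of_continuous (Lop_continuous hφs) (Lop_support hφB)
  have main : ∀ z, cutm z * eta ε z - ((C2 + 2 * C3) * C1) * (Br.indicator (fun _ => (1 : ℝ)) z)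
      ≤ - 1 * Lop φ z := by
    intro z
    have e1 := Lop_mul hcs (uk_contDiff hε) z
    rw [uk_Lop hε, uk_dv hε] at e1
    have e2 : cut z * eta ε z = cutm z * eta ε z := by
      unfold cutm
      split_ifs with h
      · rfl
      · rw [eta_zero hε (by linarith)]; simp
    have err : uk ε z * Lop cut z + 2 * (fderiv ℝ cut z (0, 0, 1) * (uk ε z * bv z)) ≤
        ((C2 + 2 * C3) * C1) * (Br.indicator (fun _ => (1 : ℝ)) z) := by
      have hrhs : 0 ≤ ((C2 + 2 * C3) * C1) * (Br.indicator (fun _ => (1 : ℝ)) z) :=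
        mul_nonneg (by positivity) (Set.indicator_nonneg (fun _ _ => by norm_num) _)
      by_cases ht : z.1 < 0
      swap
      · rw [uk_zero hε (by linarith : -ε ≤ z.1)]
        simpa using hrhs
      -- the commutator terms vanish where the cutoff is locally constant; on the remaining annulus
      -- `Ker_bound` applies, uniformly in `ε`
      by_cases hz0 : r0 < ‖z‖
      · rw [(evL z 0 (ev0 z hz0)).1, (evL z 0 (ev0 z hz0)).2]
        simpa using hrhs
      by_cases hz1 : ‖z‖ < r0 / 2
      · rw [(evL z 1 (ev1 z hz1)).1, (evL z 1 (ev1 z hz1)).2]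
        simpa using hrhs
      rw [Set.indicator_of_mem (mem_Br (not_lt.1 hz0) ht), mul_one]
      have hr1 : r0 ≤ 1 := by unfold r0; norm_num
      have k := hK z ht (not_lt.1 hz1) ((not_lt.1 hz0).trans hr1)
      have hu := uk_le_Ker ε z
      have hu0 := uk_nonneg ε z
      have k1 : uk ε z ≤ C1 := by
        nlinarith [mul_nonneg (Ker_nonneg z) (abs_nonneg (bv z))]
      have k2 : uk ε z * |bv z| ≤ C1 := by
        nlinarith [mul_le_mul_of_nonneg_right hu (abs_nonneg (bv z)), Ker_nonneg z]
      have b1 : uk ε z * Lop cut z ≤ C1 * C2 :=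
        (mul_le_mul_of_nonneg_left ((le_abs_self _).trans (hC2 z)) hu0).trans
          (mul_le_mul_of_nonneg_right k1 hC20)
      have b2 : fderiv ℝ cut z (0, 0, 1) * (uk ε z * bv z) ≤ C3 * C1 := by
        refine (le_abs_self _).trans ?_
        rw [abs_mul, abs_mul, abs_of_nonneg hu0]
        exact mul_le_mul (hC3 z) k2 (by positivity) hC30
      linarith
    have : Lop φ z = _ := e1
    rw [this, ← e2]
    linarith
  have := J_mono (hce.sub (hBr.const_mul _)) (hL.const_mul (-1)) hH h0 R p main
  rw [J_sub hce (hBr.const_mul _) hH, J_const_mul, J_const_mul, e] at this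
  linarith


/-! ### A lower bound by a subsolution -/

/-- A smooth convex nondecreasing function vanishing on `u ≤ 2¹⁷`, with slope `1` on `u ≥ 2¹⁸`. -/
def Fc (u : ℝ) : ℝ := ∫ s in (0 : ℝ)..u, Real.smoothTransition ((s - 2 ^ 17) / 2 ^ 17)

lemma Fc_hasDerivAt (u : ℝ) : HasDerivAt Fc (Real.smoothTransition ((u - 2 ^ 17) / 2 ^ 17)) u := by
  have hc : Continuous fun s : ℝ => Real.smoothTransition ((s - 2 ^ 17) / 2 ^ 17) :=
    Real.smoothTransition.continuous.comp (by fun_prop)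
  exact intervalIntegral.integral_hasDerivAt_right (hc.intervalIntegrable _ _)
    (hc.stronglyMeasurableAtFilter _ _) hc.continuousAt

lemma Fc_deriv : deriv Fc = fun u => Real.smoothTransition ((u - 2 ^ 17) / 2 ^ 17) :=
  funext fun u => (Fc_hasDerivAt u).deriv

lemma Fc_contDiff : ContDiff ℝ ((⊤ : ℕ∞) : WithTop ℕ∞) Fc := by
  rw [contDiff_infty_iff_deriv]
  refine ⟨fun u => (Fc_hasDerivAt u).differentiableAt, ?_⟩
  rw [Fc_deriv]
  have h1 : ContDiff ℝ ((⊤ : ℕ∞) : WithTop ℕ∞) (fun u : ℝ => (u - 2 ^ 17) / 2 ^ 17) := by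
    simp only [div_eq_mul_inv]; fun_prop
  exact (sT_contDiff (n := ⊤)).comp h1

lemma Fc_deriv2_nonneg (u : ℝ) : 0 ≤ deriv (deriv Fc) u := by
  rw [Fc_deriv]
  refine Monotone.deriv_nonneg fun a b hab => sT_mono ?_
  gcongr

lemma Fc_zero {u : ℝ} (hu : u ≤ 2 ^ 17) : Fc u = 0 := by
  unfold Fc
  rw [intervalIntegral.integral_congr (g := fun _ => 0)]
  · simp
  · intro s hs
    refine Real.smoothTransition.zero_of_nonpos (div_nonpos_of_nonpos_of_nonneg ?_ (by norm_num))
    rw [mem_uIcc] at hs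
    rcases hs with h | h <;> linarith [h.1, h.2]

/-- The box on which the lower bound is obtained, centred at time distance `γ = 2⁻¹⁰` from the pole. -/
def Nb : Set P3 := Icc (-(3 / 2 ^ 11)) (-(1 / 2 ^ 11)) ×ˢ Icc (-(1 / 2 ^ 20)) (1 / 2 ^ 20)
  ×ˢ Icc (-(1 / 2 ^ 20)) (1 / 2 ^ 20)

lemma Nb_subset : Nb ⊆ Box := by
  rintro z ⟨⟨a, b⟩, ⟨c, d⟩, ⟨e, f⟩⟩
  norm_num at a b c d e f
  exact ⟨⟨by linarith, by linarith⟩, ⟨by linarith, by linarith⟩, ⟨by linarith, by linarith⟩⟩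

lemma Nb_measurable : MeasurableSet Nb :=
  measurableSet_Icc.prod (measurableSet_Icc.prod measurableSet_Icc)

lemma Box_measurable : MeasurableSet Box :=
  measurableSet_Icc.prod (measurableSet_Icc.prod measurableSet_Icc)

/-- On `Nb` the time `t` is comparable to `-2⁻¹⁰`, while `x` and `v` are so small that the exponent is negligible. -/
lemma Ker_Nb {z : P3} (hz : z ∈ Nb) : 2 ^ 20 / 5 ≤ Ker z := by
  obtain ⟨t, x, v⟩ := z
  obtain ⟨⟨a, b⟩, ⟨c, d⟩, ⟨e, f⟩⟩ := hz
  simp only at a b c d e f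
  obtain ⟨τ, rfl⟩ : ∃ τ, t = -τ := ⟨-t, by simp⟩
  have t1 : 1 / 2 ^ 11 ≤ τ := by linarith
  have t2 : τ ≤ 3 / 2 ^ 11 := by linarith
  have hτ : 0 < τ := lt_of_lt_of_le (by norm_num) t1
  have hxx : x ^ 2 ≤ 1 / 2 ^ 40 := by
    have h := sq_le_sq' c d
    norm_num at h ⊢; exact h
  have hvv : v ^ 2 ≤ 1 / 2 ^ 40 := by
    have h := sq_le_sq' e f
    norm_num at h ⊢; exact h
  have hq : -ex (-τ, x, v) ≤ 1 / 8 := by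
    have e1 : -ex (-τ, x, v) = (v ^ 2 * τ ^ 2 + 3 * v * x * τ + 3 * x ^ 2) / τ ^ 3 := by
      unfold ex
      simp only
      field_simp
      ring
    rw [e1, div_le_iff₀ (by positivity)]
    have hp : 1 / 2 ^ 33 ≤ τ ^ 3 := by
      have := pow_le_pow_left₀ (by norm_num) t1 3
      norm_num at this ⊢; exact this
    have h1 : v ^ 2 * τ ^ 2 ≤ v ^ 2 * 1 := by
      refine mul_le_mul_of_nonneg_left (pow_le_one₀ hτ.le (t2.trans (by norm_num))) (sq_nonneg _)
    have h2 : 3 * v * x * τ ≤ 3 * ((v ^ 2 + x ^ 2) / 2) := by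
      have : v * x ≤ (v ^ 2 + x ^ 2) / 2 := by nlinarith [sq_nonneg (v - x)]
      have h3 : v * x * τ ≤ (v ^ 2 + x ^ 2) / 2 * 1 :=
        (mul_le_mul_of_nonneg_right this hτ.le).trans
          (mul_le_mul_of_nonneg_left (t2.trans (by norm_num)) (by positivity))
      linarith
    norm_num at hp hxx hvv ⊢
    linarith
  have h3 : 7 / 8 ≤ Real.exp (ex (-τ, x, v)) := by
    have := Real.add_one_le_exp (ex (-τ, x, v))
    linarith
  have h4 : 2 ^ 22 / 9 ≤ ((-τ) ^ 2)⁻¹ := by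
    rw [neg_sq, le_inv_comm₀ (by norm_num) (by positivity)]
    have := pow_le_pow_left₀ hτ.le t2 2
    norm_num at this ⊢; exact this
  rw [Ker_eq]
  have := mul_le_mul h4 h3 (by norm_num) (by positivity)
  refine le_trans ?_ this
  norm_num

/-- Superlevel sets of the kernel are confined to a small box around the pole: a large value forces
`τ²·exp q` to be small, where `τ = -t` and `-q` is the exponent, hence `τ` and `τ * q` to be small,
and the latter controls `x` and `v`. -/
lemma mem_Box_of_Ker {z : P3} (hz : z.1 < 0) (hK : 2 ^ 16 < Ker z) : z ∈ Box := by
  obtain ⟨t, x, v⟩ := z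
  obtain ⟨τ, rfl⟩ : ∃ τ, t = -τ := ⟨-t, by simp⟩
  have hτ : 0 < τ := by simpa using hz
  set q := -ex (-τ, x, v) with hq
  have hq0 : 0 ≤ q := ex_nonpos (z := (-τ, x, v)) hz
  have h1 := ex_le_v (z := (-τ, x, v)) hz
  have h2 := ex_le_x (z := (-τ, x, v)) hz
  rw [Ker_eq, show ex (-τ, x, v) = -q by simp [hq], Real.exp_neg, ← mul_inv] at hK
  simp only [neg_sq] at hK h1 h2
  rw [← hq] at h1 h2
  rw [lt_inv_comm₀ (by norm_num) (by positivity)] at hK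
  have e1 : (1 + q / 2) ^ 2 ≤ Real.exp q := by
    have : 1 + q / 2 ≤ Real.exp (q / 2) := by linarith [Real.add_one_le_exp (q / 2)]
    calc (1 + q / 2) ^ 2 ≤ Real.exp (q / 2) ^ 2 := by gcongr
      _ = Real.exp q := by rw [← Real.exp_nat_mul]; congr 1; push_cast; ring
  have e2 : (τ * (1 + q / 2)) ^ 2 < (1 / 2 ^ 8) ^ 2 := by
    calc (τ * (1 + q / 2)) ^ 2 = τ ^ 2 * (1 + q / 2) ^ 2 := by ring
      _ ≤ τ ^ 2 * Real.exp q := by gcongr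
      _ < (2 ^ 16)⁻¹ := hK
      _ = (1 / 2 ^ 8) ^ 2 := by norm_num
  have e3 : τ * (1 + q / 2) < 1 / 2 ^ 8 := lt_of_pow_lt_pow_left₀ 2 (by norm_num) e2
  have e4 : 0 ≤ τ * q := by positivity
  norm_num at e3
  have hτ1 : τ < 1 / 256 := by nlinarith
  have hτq : τ * q < 1 / 128 := by nlinarith
  have hv : v ^ 2 ≤ 4 * (τ * q) := by
    rw [show -4 * (-τ) = 4 * τ by ring, div_le_iff₀ (by positivity)] at h1
    linarith
  have hx : 3 * x ^ 2 ≤ 4 * (τ * q) * τ ^ 2 := by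
    rw [show -4 * (-τ) ^ 3 = 4 * τ ^ 3 by ring, div_le_iff₀ (by positivity)] at h2
    linarith
  have hx' : x ^ 2 ≤ (1 / 4) ^ 2 := by
    have t2 : τ ^ 2 ≤ 1 := pow_le_one₀ hτ.le (by linarith)
    have := mul_le_mul_of_nonneg_left t2 (show 0 ≤ 4 * (τ * q) by positivity)
    norm_num; linarith
  have hv' : v ^ 2 ≤ (1 / 4) ^ 2 := by norm_num; linarith
  exact ⟨⟨by simp only; linarith, by simp only; linarith⟩, abs_le_of_sq_le_sq' hx' (by norm_num),
    abs_le_of_sq_le_sq' hv' (by norm_num)⟩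

/-- The average over `Nb` is controlled by the values of the lift at its pole: with
`U = (2 + t) · uk ε`, the function `Fc ∘ U` is supported in `Box`, and `Lop U = uk ε - (2 + t) · eta ε`
is at least `1` on `Nb`. -/
lemma lower {R : ℝ} {H : P2 → ℝ} (hH : Integrable H) (h0 : ∀ q, 0 ≤ H q) {p : P2} (hp : Sol R H p)
    {ε : ℝ} (hε : 0 < ε) (hε' : ε ≤ 1 / 2 ^ 12) :
    J R H (Nb.indicator fun _ => 1) p
      ≤ 2 * J R H (fun z => Box.indicator (fun _ => 1) z * eta ε z) p := by
  have hus := uk_contDiff hε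
  have hfs : ContDiff ℝ ((⊤ : ℕ∞) : WithTop ℕ∞) (fun z : P3 => 2 + z.1) := by fun_prop
  set U : P3 → ℝ := fun z => (2 + z.1) * uk ε z with hU
  have hUs : ContDiff ℝ ((⊤ : ℕ∞) : WithTop ℕ∞) U := hfs.mul hus
  have hfd : ∀ z w : P3, fderiv ℝ (fun z : P3 => 2 + z.1) z w = w.1 := by
    intro z w
    have h1 : HasFDerivAt (fun z : P3 => 2 + z.1) (ContinuousLinearMap.fst ℝ ℝ (ℝ × ℝ)) z :=
      hasFDerivAt_fst.const_add 2
    rw [h1.fderiv]; rfl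
  have hfL : ∀ z, Lop (fun z : P3 => 2 + z.1) z = 1 := by
    intro z
    unfold Lop
    simp only [hfd]
    simp
  have hUL : ∀ z, Lop U z = uk ε z - (2 + z.1) * eta ε z := by
    intro z
    have := Lop_mul hfs hus z
    rw [hfL, hfd, uk_Lop hε] at this
    rw [show Lop U z = _ from this]
    simp
    ring
  have hUneg : ∀ z, 2 ^ 17 < U z → z.1 < 0 ∧ 0 < 2 + z.1 ∧ z ∈ Box := by
    intro z hz
    have h1 : z.1 < 0 := by
      by_contra hn
      have : U z = 0 := by
        simp only [hU]
        rw [uk_zero hε (by linarith), mul_zero]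
      rw [this] at hz
      norm_num at hz
    have h2 : 0 < 2 + z.1 := by
      by_contra hn
      have : U z ≤ 0 := mul_nonpos_of_nonpos_of_nonneg (not_lt.1 hn) (uk_nonneg ε z)
      have : (2 : ℝ) ^ 17 < 0 := hz.trans_le this
      norm_num at this
    refine ⟨h1, h2, mem_Box_of_Ker h1 ?_⟩
    have h3 : U z ≤ 2 * Ker z :=
      mul_le_mul (by linarith) (uk_le_Ker ε z) (uk_nonneg ε z) (by norm_num)
    have : (2 : ℝ) ^ 17 = 2 * 2 ^ 16 := by norm_num
    linarith
  have hφs : ContDiff ℝ ((⊤ : ℕ∞) : WithTop ℕ∞) (fun z => Fc (U z)) := Fc_contDiff.comp hUs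
  have hφB : ∀ z, Fc (U z) ≠ 0 → z ∈ Box := by
    intro z hz
    refine (hUneg z ?_).2.2
    by_contra hn
    exact hz (Fc_zero (not_lt.1 hn))
  have hukN : ∀ z ∈ Nb, uk ε z = Ker z := by
    intro z hz
    have := hz.1.2
    unfold uk
    rw [Real.smoothTransition.one_of_one_le, one_mul]
    rw [le_sub_iff_add_le, le_div_iff₀ hε]
    norm_num at this hε' ⊢
    linarith
  have hUN : ∀ z ∈ Nb, 2 ^ 18 ≤ U z := by
    intro z hz
    have h1 := Ker_Nb hz
    have h2 := hz.1.1
    simp only [hU]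
    rw [hukN z hz]
    have h3 : (3 / 2 : ℝ) ≤ 2 + z.1 := by norm_num at h2 ⊢; linarith
    have := mul_le_mul h3 h1 (by norm_num) (by linarith)
    refine le_trans ?_ this
    norm_num
  have hBe := (Adm.indicator Box_measurable subset_rfl).mul_eta hε
  have hN := Adm.indicator Nb_measurable Nb_subset
  have hL : Adm (Lop fun z => Fc (U z)) :=
    Adm.of_continuous (Lop_continuous hφs) (Lop_support hφB)
  have main : ∀ z, Nb.indicator (fun _ => (1 : ℝ)) z
      - 2 * (Box.indicator (fun _ => (1 : ℝ)) z * eta ε z) ≤ Lop (fun z => Fc (U z)) z := by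
    intro z
    have he := eta_nonneg hε z
    rw [Lop_comp Fc_contDiff hUs, hUL]
    -- convexity of `Fc` makes the second-order term of the chain rule nonnegative
    have hsq : 0 ≤ deriv (deriv Fc) (U z) * (fderiv ℝ U z (0, 0, 1)) ^ 2 :=
      mul_nonneg (Fc_deriv2_nonneg _) (sq_nonneg _)
    by_cases hz : 2 ^ 17 < U z
    · obtain ⟨h1, h2, h3⟩ := hUneg z hz
      rw [Set.indicator_of_mem h3]
      have d0 : 0 ≤ deriv Fc (U z) := by rw [Fc_deriv]; exact Real.smoothTransition.nonneg _
      have d1 : deriv Fc (U z) ≤ 1 := by rw [Fc_deriv]; exact Real.smoothTransition.le_one _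
      have k1 : deriv Fc (U z) * ((2 + z.1) * eta ε z) ≤ 1 * (2 * eta ε z) :=
        mul_le_mul d1 (mul_le_mul_of_nonneg_right (by linarith) he) (by positivity) (by norm_num)
      have k2 : Nb.indicator (fun _ => (1 : ℝ)) z ≤ deriv Fc (U z) * uk ε z := by
        by_cases hzN : z ∈ Nb
        · rw [Set.indicator_of_mem hzN, Fc_deriv]
          simp only
          rw [Real.smoothTransition.one_of_one_le, one_mul, hukN z hzN]
          · refine le_trans ?_ (Ker_Nb hzN)
            norm_num
          · rw [le_div_iff₀ (by norm_num)]
            have := hUN z hzN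
            norm_num at this ⊢
            linarith
        · rw [Set.indicator_of_notMem hzN]
          exact mul_nonneg d0 (uk_nonneg _ _)
      linarith
    · have hzN : z ∉ Nb := fun h => hz (lt_of_lt_of_le (by norm_num) (hUN z h))
      rw [Set.indicator_of_notMem hzN]
      have d0 : deriv Fc (U z) = 0 := by
        rw [Fc_deriv]
        refine Real.smoothTransition.zero_of_nonpos
          (div_nonpos_of_nonpos_of_nonneg ?_ (by norm_num))
        linarith
      rw [d0, zero_mul, zero_add]
      have : 0 ≤ 2 * (Box.indicator (fun _ => (1 : ℝ)) z * eta ε z) :=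
        mul_nonneg (by norm_num) (mul_nonneg (Set.indicator_nonneg (fun _ _ => by norm_num) _) he)
      linarith
  have := J_mono (hN.sub (hBe.const_mul 2)) hL hH h0 R p main
  rw [J_sub hN (hBe.const_mul 2) hH, J_const_mul, hp _ hφs hφB] at this
  linarith

/-! ### Comparison of the two averages -/

/-- The two averages are taken around different points and at different times; since `H` does not
depend on time, a time shift maps one domain of integration into the other. -/
lemma J_shift {R : ℝ} {H : P2 → ℝ} (hH : Integrable H) (h0 : ∀ q, 0 ≤ H q) {p p' : P2} {s : ℝ}
    (hyp : ∀ z : P3, Sig R p z ∈ Br → Sig R p' (z - (s, 0, 0)) ∈ Nb) :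
    J R H (Br.indicator fun _ => 1) p ≤ J R H (Nb.indicator fun _ => 1) p' := by
  have i2 : ((volume : Measure (ℝ × ℝ))).IsAddHaarMeasure := Measure.prod.instIsAddHaarMeasure _ _
  have i3 : ((volume : Measure P3)).IsAddHaarMeasure := Measure.prod.instIsAddHaarMeasure _ _
  have e : J R H (Nb.indicator fun _ => 1) p' =
      ∫ z : P3, H (z - (s, 0, 0)).2 * (Nb.indicator fun _ => 1) (Sig R p' (z - (s, 0, 0))) :=
    (integral_sub_right_eq_self (μ := (volume : Measure P3))
      (fun z : P3 => H z.2 * (Nb.indicator fun _ => 1) (Sig R p' z)) ((s, 0, 0) : P3)).symm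
  rw [e]
  refine integral_mono ((Adm.indicator Br_measurable Br_subset).integrable hH R p) ?_ fun z => ?_
  · exact ((Adm.indicator Nb_measurable Nb_subset).integrable hH R p').comp_sub_right (s, 0, 0)
  · have e1 : (z - (s, 0, 0)).2 = z.2 := by
      ext <;> simp
    simp only [e1]
    refine mul_le_mul_of_nonneg_left ?_ (h0 _)
    by_cases hz : Sig R p z ∈ Br
    · rw [Set.indicator_of_mem hz, Set.indicator_of_mem (hyp z hz)]
    · rw [Set.indicator_of_notMem hz]
      exact Set.indicator_nonneg (fun _ _ => by norm_num) _

/-- The sets on which supremum and infimum are taken. -/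
def Blk (R x₀ v₀ s : ℝ) : Set P2 :=
  Aslant r0 R x₀ v₀ s ×ˢ Set.Ioo (v₀ - r0 * R) (v₀ + r0 * R)

lemma Blk_coord {R : ℝ} (hR : 0 < R) {x₀ v₀ s : ℝ} {p : P2} (hp : p ∈ Blk R x₀ v₀ s) :
    ∃ T X V : ℝ, -r0 ^ 2 ≤ T ∧ T ≤ 0 ∧ |X| ≤ r0 ^ 3 ∧ |V| ≤ r0 ∧
      p.1 = x₀ + v₀ * R ^ 2 * (T - s) + R ^ 3 * X ∧ p.2 = v₀ + R * V := by
  obtain ⟨⟨t, ⟨h1, h2⟩, h3⟩, h4, h5⟩ := hp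
  have hR2 : (0 : ℝ) < R ^ 2 := by positivity
  have hR3 : (0 : ℝ) < R ^ 3 := by positivity
  refine ⟨t / R ^ 2, (p.1 - x₀ - v₀ * (t - R ^ 2 * s)) / R ^ 3, (p.2 - v₀) / R, ?_, ?_, ?_, ?_, ?_, ?_⟩
  · rw [le_div_iff₀ hR2]
    have : -(r0 * R) ^ 2 = -r0 ^ 2 * R ^ 2 := by ring
    linarith
  · exact div_nonpos_of_nonpos_of_nonneg h2 hR2.le
  · rw [abs_div, abs_of_pos hR3, div_le_iff₀ hR3, ← mul_pow]
    exact h3.le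
  · rw [abs_div, abs_of_pos hR, div_le_iff₀ hR, abs_le]
    constructor <;> linarith
  · field_simp
    ring
  · field_simp
    ring

lemma compare {R : ℝ} (hR : 0 < R) {x₀ v₀ : ℝ} {H : P2 → ℝ} (hH : Integrable H)
    (h0 : ∀ q, 0 ≤ H q) {p p' : P2} (hp : p ∈ Blk R x₀ v₀ (1 / 2 ^ 10)) (hp' : p' ∈ Blk R x₀ v₀ 0) :
    J R H (Br.indicator fun _ => 1) p ≤ J R H (Nb.indicator fun _ => 1) p' := by
  obtain ⟨T, X, V, a1, a2, a3, a4, a5, a6⟩ := Blk_coord hR hp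
  obtain ⟨T', X', V', b1, b2, b3, b4, b5, b6⟩ := Blk_coord hR hp'
  refine J_shift hH h0 (s := 1 / 2 ^ 10 + T' - T) fun z hz => ?_
  obtain ⟨y, rfl⟩ := (sigHomeo R hR p).symm.surjective z
  have hy : Sig R p ((sigHomeo R hR p).symm y) = y := (sigHomeo R hR p).apply_symm_apply y
  rw [hy] at hz
  obtain ⟨t, x, v⟩ := y
  obtain ⟨⟨c1, c2⟩, ⟨c3, c4⟩, ⟨c5, c6⟩⟩ := hz
  have e : Sig R p' ((sigHomeo R hR p).symm (t, x, v) - (1 / 2 ^ 10 + T' - T, 0, 0)) =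
      (t - (1 / 2 ^ 10 + T' - T), x + (X - X') + (V - V') * t + V' * (1 / 2 ^ 10 + T' - T),
        v + (V - V')) := by
    have := hR.ne'
    simp only [sigHomeo, Sig, Homeomorph.symm, Equiv.symm, Homeomorph.homeomorph_mk_coe,
      Equiv.coe_fn_mk]
    ext
    · simp
    · simp [a5, a6, b5, b6]
      field_simp
      ring
    · simp [a6, b6]
      field_simp
      ring
  rw [e]
  have hr : r0 = 1 / 2 ^ 24 := rfl
  rw [abs_le] at a3 a4 b3 b4
  rw [hr] at a1 a3 a4 b1 b3 b4 c1 c3 c4 c5 c6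
  simp only at c1 c2 c3 c4 c5 c6
  have m1 : |(V - V') * t| ≤ 1 / 2 ^ 24 := by
    rw [abs_mul]
    have : |V - V'| ≤ 1 := by rw [abs_le]; norm_num at *; constructor <;> linarith
    have h2 : |t| ≤ 1 / 2 ^ 24 := by rw [abs_le]; norm_num at *; constructor <;> linarith
    calc |V - V'| * |t| ≤ 1 * (1 / 2 ^ 24) := mul_le_mul this h2 (abs_nonneg _) (by norm_num)
      _ = _ := one_mul _
  have m2 : |V' * (1 / 2 ^ 10 + T' - T)| ≤ 1 / 2 ^ 24 := by
    rw [abs_mul]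
    have : |1 / 2 ^ 10 + T' - T| ≤ 1 := by rw [abs_le]; norm_num at *; constructor <;> linarith
    have h2 : |V'| ≤ 1 / 2 ^ 24 := abs_le.2 b4
    calc |V'| * |1 / 2 ^ 10 + T' - T| ≤ (1 / 2 ^ 24) * 1 :=
          mul_le_mul h2 this (abs_nonneg _) (by norm_num)
      _ = _ := mul_one _
  rw [abs_le] at m1 m2
  obtain ⟨m11, m12⟩ := m1
  obtain ⟨m21, m22⟩ := m2
  obtain ⟨a31, a32⟩ := a3
  obtain ⟨a41, a42⟩ := a4
  obtain ⟨b31, b32⟩ := b3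
  obtain ⟨b41, b42⟩ := b4
  refine ⟨⟨?_, ?_⟩, ⟨?_, ?_⟩, ⟨?_, ?_⟩⟩ <;> simp only <;> norm_num at * <;> linarith

/-! ### The source of the kernel as an approximate identity -/

lemma map_scale {a b c : ℝ} (ha : 0 < a) (hb : 0 < b) (hc : 0 < c) :
    Measure.map (fun y : P3 => ((a * y.1, b * y.2.1, c * y.2.2) : P3)) volume
      = ENNReal.ofReal (a * b * c)⁻¹ • (volume : Measure P3) := by
  have e : (fun y : P3 => ((a * y.1, b * y.2.1, c * y.2.2) : P3)) =
      Prod.map (fun s => a * s) (Prod.map (fun s => b * s) fun s => c * s) := rfl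
  have m : ∀ d : ℝ, Measurable fun s : ℝ => d * s := fun d => by fun_prop
  rw [e, Measure.volume_eq_prod ℝ (ℝ × ℝ), ← Measure.map_prod_map _ _ (m a) ((m b).prodMap (m c)),
    Measure.volume_eq_prod ℝ ℝ, ← Measure.map_prod_map _ _ (m b) (m c),
    Real.map_volume_mul_left ha.ne', Real.map_volume_mul_left hb.ne', Real.map_volume_mul_left hc.ne']
  rw [Measure.prod_smul_left, Measure.prod_smul_left, Measure.prod_smul_right,
    Measure.prod_smul_right, Measure.prod_smul_right, smul_smul, smul_smul]
  rw [abs_of_pos (inv_pos.2 ha), abs_of_pos (inv_pos.2 hb), abs_of_pos (inv_pos.2 hc), mul_inv, mul_inv,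
    ENNReal.ofReal_mul (by positivity), ENNReal.ofReal_mul (by positivity)]

lemma mp_shift (A B C : ℝ) : MeasurePreserving
    (fun w : P3 => ((w.1, A + B * w.1 + w.2.1, C + w.2.2) : P3)) volume volume := by
  have i2 : ((volume : Measure (ℝ × ℝ))).IsAddHaarMeasure := Measure.prod.instIsAddHaarMeasure _ _
  have := MeasurePreserving.skew_product (MeasurePreserving.id (volume : Measure ℝ))
    (μc := (volume : Measure (ℝ × ℝ))) (μd := (volume : Measure (ℝ × ℝ)))
    (g := fun t q => (A + B * t + q.1, C + q.2)) (by unfold Function.uncurry; fun_prop) ?_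
  · exact this
  · refine Eventually.of_forall fun t => ?_
    exact (measurePreserving_add_left (volume : Measure (ℝ × ℝ)) (A + B * t, C)).map_eq

/-- Shears of the phase plane preserve Lebesgue measure. -/
lemma mp_shear (a b c : ℝ) : MeasurePreserving
    (fun p : P2 => ((p.1 + a * p.2 + b, p.2 + c) : P2)) volume volume := by
  have h1 : MeasurePreserving (fun p : P2 => ((p.1 + c, p.2 + (a * p.1 + b)) : P2)) volume volume := by
    have := MeasurePreserving.skew_product (measurePreserving_add_right (volume : Measure ℝ) c)
      (μc := (volume : Measure ℝ)) (μd := (volume : Measure ℝ))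
      (g := fun t q => q + (a * t + b)) (by unfold Function.uncurry; fun_prop) ?_
    · exact this
    · refine Eventually.of_forall fun t => ?_
      exact (measurePreserving_add_right (volume : Measure ℝ) (a * t + b)).map_eq
  have h2 : MeasurePreserving (Prod.swap : P2 → P2) volume volume := Measure.measurePreserving_swap
  have := h2.comp (h1.comp h2)
  convert this using 1
  ext p <;> simp [add_assoc]

/-- The parabolic dilation of ratio `l`. -/
def Dl (l : ℝ) (y : P3) : P3 := (l ^ 2 * y.1, l ^ 3 * y.2.1, l * y.2.2)

/-- The physical point with dilated kinetic coordinates `Dl l y` with respect to `p`. -/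
def Tm (R l : ℝ) (y : P3) (p : P2) : P2 :=
  (p.1 + R ^ 2 * p.2 * (l ^ 2 * y.1) + R ^ 3 * (l ^ 3 * y.2.1), p.2 + R * (l * y.2.2))

/-- The inverse of `Tm`. -/
def Sm (R l : ℝ) (y : P3) (q : P2) : P2 :=
  (q.1 - R ^ 2 * (q.2 - R * (l * y.2.2)) * (l ^ 2 * y.1) - R ^ 3 * (l ^ 3 * y.2.1),
    q.2 - R * (l * y.2.2))

lemma Tm_Sm (R l : ℝ) (y : P3) (q : P2) : Tm R l y (Sm R l y q) = q := by
  ext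
  · simp [Tm, Sm]
    ring
  · simp [Tm, Sm]

lemma Tm_mp (R l : ℝ) (y : P3) : MeasurePreserving (Tm R l y) volume volume := by
  convert mp_shear (R ^ 2 * (l ^ 2 * y.1)) (R ^ 3 * (l ^ 3 * y.2.1)) (R * (l * y.2.2)) using 1
  ext p <;> simp [Tm]
  ring

lemma Sm_mp (R l : ℝ) (y : P3) : MeasurePreserving (Sm R l y) volume volume := by
  convert mp_shear (-(R ^ 2 * (l ^ 2 * y.1)))
    (R ^ 2 * (R * (l * y.2.2)) * (l ^ 2 * y.1) - R ^ 3 * (l ^ 3 * y.2.1)) (-(R * (l * y.2.2))) using 1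
  ext p <;> simp [Sm] <;> ring

lemma eta_scale {l : ℝ} (hl : 0 < l) (y : P3) : eta (l ^ 2) (Dl l y) = (l ^ 6)⁻¹ * eta 1 y := by
  unfold eta Ker Dl
  have hl' := hl.ne'
  have e1 : -(l ^ 2 * y.1) / l ^ 2 - 1 = -y.1 / 1 - 1 := by field_simp
  simp only [e1]
  by_cases hy : y.1 = 0
  · simp [hy]
  have e2 : (l * y.2.2) ^ 2 / (l ^ 2 * y.1) - 3 * (l * y.2.2) * (l ^ 3 * y.2.1) / (l ^ 2 * y.1) ^ 2
      + 3 * (l ^ 3 * y.2.1) ^ 2 / (l ^ 2 * y.1) ^ 3 =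
      y.2.2 ^ 2 / y.1 - 3 * y.2.2 * y.2.1 / y.1 ^ 2 + 3 * y.2.1 ^ 2 / y.1 ^ 3 := by
    field_simp
  rw [e2]
  field_simp

lemma J_scale {R : ℝ} (hR : 0 < R) {H : P2 → ℝ} (hH : Measurable H) {χ : P3 → ℝ} (hχ : Measurable χ)
    {l : ℝ} (hl : 0 < l) (p : P2) :
    J R H (fun z => χ z * eta (l ^ 2) z) p
      = R ^ 4 * ∫ y : P3, H (Tm R l y p) * (χ (Dl l y) * eta 1 y) := by
  set D : P3 → P3 := fun y => (l ^ 2 * y.1, p.1 + R ^ 2 * p.2 * (l ^ 2 * y.1) + R ^ 3 * l ^ 3 * y.2.1,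
    p.2 + R * l * y.2.2) with hD
  have hR' := hR.ne'
  have hl' := hl.ne'
  have hDm : Measurable D := by fun_prop
  have hmap : Measure.map D volume
      = ENNReal.ofReal (l ^ 2 * (R ^ 3 * l ^ 3) * (R * l))⁻¹ • (volume : Measure P3) := by
    have h1 := (mp_shift p.1 (R ^ 2 * p.2) p.2)
    have h2 := map_scale (a := l ^ 2) (b := R ^ 3 * l ^ 3) (c := R * l) (by positivity)
      (by positivity) (by positivity)
    have : D = (fun w : P3 => ((w.1, p.1 + R ^ 2 * p.2 * w.1 + w.2.1, p.2 + w.2.2) : P3)) ∘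
      (fun y : P3 => ((l ^ 2 * y.1, R ^ 3 * l ^ 3 * y.2.1, R * l * y.2.2) : P3)) := rfl
    rw [this, ← Measure.map_map h1.measurable (by fun_prop), h2, Measure.map_smul, h1.map_eq]
  have hSm : Measurable (Sig R p) := (sig_continuous R p).measurable
  have hem := eta_measurable (l ^ 2)
  have hF : Measurable fun z : P3 => H z.2 * (χ (Sig R p z) * eta (l ^ 2) (Sig R p z)) := by
    fun_prop
  have key := integral_map (μ := (volume : Measure P3)) hDm.aemeasurable hF.aestronglyMeasurable
  rw [hmap, integral_smul_measure, ENNReal.toReal_ofReal (by positivity), smul_eq_mul] at key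
  have hSD : ∀ y, Sig R p (D y) = Dl l y := by
    intro y
    simp only [Sig, hD, Dl]
    ext
    · rfl
    · simp only
      field_simp
      ring
    · simp only
      field_simp
      ring
  have hTD : ∀ y, (D y).2 = Tm R l y p := by
    intro y
    simp only [Tm, hD]
    ext <;> simp only <;> ring
  simp only [hSD, hTD, eta_scale hl] at key
  have e3 : ∀ y, H (Tm R l y p) * (χ (Dl l y) * ((l ^ 6)⁻¹ * eta 1 y)) =
      (l ^ 6)⁻¹ * (H (Tm R l y p) * (χ (Dl l y) * eta 1 y)) := fun y => by ring
  simp only [e3] at key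
  rw [integral_const_mul] at key
  unfold J
  have e4 : (l ^ 2 * (R ^ 3 * l ^ 3) * (R * l)) = R ^ 4 * l ^ 6 := by ring
  rw [e4, inv_mul_eq_iff_eq_mul₀ (by positivity)] at key
  rw [key]
  field_simp

/-- The source lives at times in `[-2, -1]`, where the kernel has Gaussian decay in `x` and `v`. -/
lemma eta_one_integrable : Integrable (eta 1) := by
  have hcs : HasCompactSupport (deriv Real.smoothTransition) :=
    HasCompactSupport.intro (isCompact_Icc (a := (0 : ℝ)) (b := 1)) fun x hx => by
      rcases lt_or_ge x 0 with h | h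
      · exact sT_deriv_zero h.le
      · refine sT_deriv_zero' ?_
        by_contra hn
        exact hx ⟨h, (not_le.1 hn).le⟩
  obtain ⟨C, hC⟩ := hcs.exists_bound_of_continuous sT_deriv_cont
  have hC0 : 0 ≤ C := (norm_nonneg _).trans (hC 0)
  have h1 : Integrable (fun z : P3 => (Icc (-2 : ℝ) (-1)).indicator (fun _ => C) z.1 *
      (Real.exp (-(3 / 64) * z.2.1 ^ 2) * Real.exp (-(1 / 16) * z.2.2 ^ 2))) :=
    Integrable.mul_prod ((integrable_indicator_iff measurableSet_Icc).2
      (integrableOn_const (by simp)))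
      (Integrable.mul_prod (f := fun x : ℝ => Real.exp (-(3 / 64) * x ^ 2))
        (g := fun x : ℝ => Real.exp (-(1 / 16) * x ^ 2))
        (integrable_exp_neg_mul_sq (by norm_num)) (integrable_exp_neg_mul_sq (by norm_num)))
  refine h1.mono' (eta_measurable 1).aestronglyMeasurable (Eventually.of_forall fun z => ?_)
  rw [Real.norm_eq_abs, abs_of_nonneg (eta_nonneg one_pos z)]
  by_cases hz : z.1 ∈ Icc (-2 : ℝ) (-1)
  · rw [Set.indicator_of_mem hz]
    obtain ⟨t, x, v⟩ := z
    obtain ⟨τ, rfl⟩ : ∃ τ, t = -τ := ⟨-t, by simp⟩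
    obtain ⟨a, b⟩ := hz
    simp only at a b
    have hτ : 1 ≤ τ := by linarith
    have hτ2 : τ ≤ 2 := by linarith
    have hneg : (-τ : ℝ) < 0 := by linarith
    have k1 := ex_le_v (z := (-τ, x, v)) hneg
    have k2 := ex_le_x (z := (-τ, x, v)) hneg
    simp only at k1 k2
    have k3 : v ^ 2 / 8 ≤ v ^ 2 / (-4 * -τ) := by
      gcongr <;> linarith
    have k4 : 3 * x ^ 2 / 32 ≤ 3 * x ^ 2 / (-4 * (-τ) ^ 3) := by
      have : -4 * (-τ) ^ 3 = 4 * τ ^ 3 := by ring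
      rw [this]
      have h8 : τ ^ 3 ≤ 2 ^ 3 := by gcongr
      gcongr
      linarith
    have k5 : Real.exp (ex (-τ, x, v)) ≤
        Real.exp (-(3 / 64) * x ^ 2) * Real.exp (-(1 / 16) * v ^ 2) := by
      rw [← Real.exp_add]
      refine Real.exp_le_exp.2 ?_
      linarith
    have k6 : Ker (-τ, x, v) ≤ Real.exp (-(3 / 64) * x ^ 2) * Real.exp (-(1 / 16) * v ^ 2) := by
      rw [Ker_eq]
      refine (mul_le_of_le_one_left (Real.exp_pos _).le ?_).trans k5
      simp only [neg_sq]
      exact inv_le_one_of_one_le₀ (one_le_pow₀ hτ)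
    unfold eta
    rw [inv_one, one_mul]
    exact mul_le_mul ((le_abs_self _).trans (hC _)) k6 (Ker_nonneg _) hC0
  · rw [Set.indicator_of_notMem hz, zero_mul]
    refine le_of_eq ?_
    unfold eta
    have : deriv Real.smoothTransition (-z.1 / 1 - 1) = 0 := by
      rcases lt_or_ge (-1 : ℝ) z.1 with h | h
      · exact sT_deriv_zero (by linarith)
      · refine sT_deriv_zero' ?_
        by_contra hn
        exact hz ⟨by linarith, h⟩
    rw [this]
    ring

/-- The total mass of the source. -/
def M1 : ℝ := ∫ z, eta 1 z

lemma M1_pos : 0 < M1 := by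
  have i2 : ((volume : Measure (ℝ × ℝ))).IsAddHaarMeasure := Measure.prod.instIsAddHaarMeasure _ _
  have i3 : ((volume : Measure P3)).IsAddHaarMeasure := Measure.prod.instIsAddHaarMeasure _ _
  unfold M1
  rw [integral_pos_iff_support_of_nonneg (fun z => eta_nonneg one_pos z) eta_one_integrable]
  refine (eta_continuous one_pos).isOpen_support.measure_pos _ ?_
  obtain ⟨x, hx⟩ : ∃ x, deriv Real.smoothTransition x ≠ 0 := by
    by_contra hn
    push Not at hn
    have := is_const_of_deriv_eq_zero (sT_contDiff (n := 1).differentiable (by simp)) hn 0 1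
    simp at this
  have hx0 : 0 < x := by
    by_contra h
    exact hx (sT_deriv_zero (not_lt.1 h))
  refine ⟨(-(x + 1), 0, 0), ?_⟩
  rw [Function.mem_support]
  unfold eta
  have e : -(-(x + 1)) / 1 - 1 = x := by ring
  simp only [e]
  refine mul_ne_zero (by simpa using hx) ?_
  unfold Ker
  have : (-(x + 1)) ^ 2 ≠ 0 := by rw [neg_sq]; positivity
  exact mul_ne_zero (inv_ne_zero this) (Real.exp_pos _).ne'

lemma Sm_tendsto (R : ℝ) (y : P3) (q : P2) :
    Tendsto (fun l => Sm R l y q) (nhdsWithin 0 (Ioi 0)) (nhds q) := by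
  have hc : Continuous fun l => Sm R l y q := by unfold Sm; fun_prop
  have := hc.tendsto 0
  have e : Sm R 0 y q = q := by ext <;> simp [Sm]
  rw [e] at this
  exact this.mono_left nhdsWithin_le_nhds

/-- Concentration at the pole, tested against `ω`. The dilation invariance of the source turns the
parameter into a vanishing shear, which is moved onto the continuous function `ω`. -/
lemma limit_meas {R : ℝ} (hR : 0 < R) {H : P2 → ℝ} (hH : Integrable H) (hHm : Measurable H)
    {χ : P3 → ℝ} (hχ : Measurable χ) (hχ1 : ∀ z, |χ z| ≤ 1) {ρ : ℝ} (hρ : 0 < ρ)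
    (hχ2 : ∀ z : P3, z.1 < 0 → ‖z‖ < ρ → χ z = 1) {ω : P2 → ℝ} (hω : Continuous ω)
    (hωc : HasCompactSupport ω) :
    Tendsto (fun l : ℝ => ∫ p, ω p * J R H (fun z => χ z * eta (l ^ 2) z) p) (nhdsWithin 0 (Ioi 0))
      (nhds (R ^ 4 * M1 * ∫ p, ω p * H p)) ∧
    ∀ l : ℝ, 0 < l → Integrable fun p => ω p * J R H (fun z => χ z * eta (l ^ 2) z) p := by
  obtain ⟨C, hC⟩ := hωc.exists_bound_of_continuous hω
  have hC0 : 0 ≤ C := (norm_nonneg _).trans (hC 0)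
  set G : ℝ → P3 → ℝ := fun l y => ∫ q, ω (Sm R l y q) * H q with hG
  have hem := eta_measurable 1
  have hDlm : ∀ l, Measurable (Dl l) := fun l => by unfold Dl; fun_prop
  have step : ∀ l : ℝ, 0 < l → ∫ p, ω p * J R H (fun z => χ z * eta (l ^ 2) z) p =
      R ^ 4 * ∫ y : P3, χ (Dl l y) * eta 1 y * G l y ∧
      Integrable fun p => ω p * J R H (fun z => χ z * eta (l ^ 2) z) p := by
    intro l hl
    have hTm : Measurable fun w : P3 × P2 => Tm R l w.1 w.2 := by unfold Tm; fun_prop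
    have int1 : Integrable (fun w : P3 × P2 =>
        (ω w.2 * χ (Dl l w.1)) * (eta 1 w.1 * H (Tm R l w.1 w.2))) (volume.prod volume) := by
      have h1 : Integrable (fun w : P3 × P2 => eta 1 w.1 * H w.2) (volume.prod volume) :=
        eta_one_integrable.mul_prod hH
      have mp : MeasurePreserving (fun w : P3 × P2 => (w.1, Tm R l w.1 w.2))
          ((volume : Measure P3).prod (volume : Measure P2)) (volume.prod volume) :=
        MeasurePreserving.skew_product (f := id) (g := fun y p => Tm R l y p)
          (MeasurePreserving.id (volume : Measure P3)) hTm
          (Eventually.of_forall fun y => (Tm_mp R l y).map_eq)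
      have h2 := mp.integrable_comp_of_integrable h1
      have hm : Measurable fun w : P3 × P2 => ω w.2 * χ (Dl l w.1) :=
        (hω.measurable.comp measurable_snd).mul ((hχ.comp (hDlm l)).comp measurable_fst)
      refine h2.bdd_mul (c := C) hm.aestronglyMeasurable (Eventually.of_forall fun w => ?_)
      rw [norm_mul]
      exact (mul_le_mul (hC _) (hχ1 _) (abs_nonneg _) hC0).trans (by rw [mul_one])
    have e1 : ∀ p, ω p * J R H (fun z => χ z * eta (l ^ 2) z) p =
        R ^ 4 * ∫ y : P3, (ω p * χ (Dl l y)) * (eta 1 y * H (Tm R l y p)) := by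
      intro p
      rw [J_scale hR hHm hχ hl, mul_left_comm, ← integral_const_mul]
      congr 2
      ext y
      ring
    simp only [e1]
    refine ⟨?_, int1.integral_prod_right.const_mul _⟩
    rw [integral_const_mul]
    congr 1
    -- Fubini, then for fixed `y` the measure-preserving substitution `p = Sm R l y q`
    rw [← integral_integral_swap (f := fun y p =>
      (ω p * χ (Dl l y)) * (eta 1 y * H (Tm R l y p))) int1]
    congr 1
    ext y
    have e2 : ∀ p, (ω p * χ (Dl l y)) * (eta 1 y * H (Tm R l y p)) =
        χ (Dl l y) * eta 1 y * (ω p * H (Tm R l y p)) := fun p => by ring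
    simp only [e2]
    rw [integral_const_mul]
    congr 1
    have hTy : Measurable (Tm R l y) := (Tm_mp R l y).measurable
    have hωm := hω.measurable
    have hm : Measurable fun p => ω p * H (Tm R l y p) := by fun_prop
    have := integral_map (μ := (volume : Measure P2)) (Sm_mp R l y).measurable.aemeasurable
      hm.aestronglyMeasurable
    rw [(Sm_mp R l y).map_eq] at this
    rw [this]
    simp only [Tm_Sm, hG]
  have hGb : ∀ l y, ‖G l y‖ ≤ C * ∫ q, ‖H q‖ := by
    intro l y
    rw [← integral_const_mul]
    refine norm_integral_le_of_norm_le (hH.norm.const_mul C) (Eventually.of_forall fun q => ?_)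
    rw [norm_mul]
    exact mul_le_mul_of_nonneg_right (hC _) (norm_nonneg _)
  have hGt : ∀ y, Tendsto (fun l => G l y) (nhdsWithin 0 (Ioi 0)) (nhds (∫ q, ω q * H q)) := by
    intro y
    refine tendsto_integral_filter_of_dominated_convergence (fun q => C * ‖H q‖) ?_ ?_
      (hH.norm.const_mul C) ?_
    · refine Eventually.of_forall fun l => ?_
      exact ((hω.measurable.comp (Sm_mp R l y).measurable).mul hHm).aestronglyMeasurable
    · refine Eventually.of_forall fun l => Eventually.of_forall fun q => ?_
      rw [norm_mul]
      exact mul_le_mul_of_nonneg_right (hC _) (norm_nonneg _)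
    · refine Eventually.of_forall fun q => ?_
      exact ((hω.tendsto q).comp (Sm_tendsto R y q)).mul_const _
  have main : Tendsto (fun l => ∫ y : P3, χ (Dl l y) * eta 1 y * G l y) (nhdsWithin 0 (Ioi 0))
      (nhds (∫ y : P3, eta 1 y * ∫ q, ω q * H q)) := by
    refine tendsto_integral_filter_of_dominated_convergence
      (fun y => eta 1 y * (C * ∫ q, ‖H q‖)) ?_ ?_ (eta_one_integrable.mul_const _) ?_
    · refine Eventually.of_forall fun l => ?_
      refine (((hχ.comp (hDlm l)).mul hem).aestronglyMeasurable).mul ?_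
      have hSm : Measurable fun w : P3 × P2 => Sm R l w.1 w.2 := by unfold Sm; fun_prop
      have hm : StronglyMeasurable fun w : P3 × P2 => ω (Sm R l w.1 w.2) * H w.2 :=
        ((hω.measurable.comp hSm).mul (hHm.comp measurable_snd)).stronglyMeasurable
      exact hm.integral_prod_right.aestronglyMeasurable
    · refine Eventually.of_forall fun l => Eventually.of_forall fun y => ?_
      rw [norm_mul, norm_mul, Real.norm_eq_abs (eta 1 y), abs_of_nonneg (eta_nonneg one_pos y)]
      refine mul_le_mul ?_ (hGb l y) (norm_nonneg _) (eta_nonneg one_pos y)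
      exact mul_le_of_le_one_left (eta_nonneg one_pos y) (hχ1 _)
    · refine Eventually.of_forall fun y => ?_
      by_cases hy : y.1 < 0
      · have hc : Continuous fun l => Dl l y := by unfold Dl; fun_prop
        have h1 : ∀ᶠ l in nhdsWithin (0 : ℝ) (Ioi 0), ‖Dl l y‖ < ρ := by
          have := hc.norm.tendsto 0
          have e : ‖Dl 0 y‖ = 0 := by simp [Dl]
          rw [e] at this
          exact (this.mono_left nhdsWithin_le_nhds).eventually (gt_mem_nhds hρ)
        have h2 : Tendsto (fun l => 1 * eta 1 y * G l y) (nhdsWithin 0 (Ioi 0))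
            (nhds (eta 1 y * ∫ q, ω q * H q)) := by
          simp only [one_mul]
          exact (hGt y).const_mul _
        refine h2.congr' ?_
        filter_upwards [h1, self_mem_nhdsWithin] with l hl hl0
        rw [hχ2 _ _ hl]
        exact mul_neg_of_pos_of_neg (pow_pos hl0 2) hy
      · rw [eta_zero one_pos (by linarith)]
        simp
  have := main.const_mul (R ^ 4)
  rw [integral_mul_const, ← mul_assoc] at this
  refine ⟨this.congr' ?_, fun l hl => (step l hl).2⟩
  filter_upwards [self_mem_nhdsWithin] with l hl
  exact (step l hl).1.symm

lemma J_congr {R : ℝ} {H H' : P2 → ℝ} (h : H =ᵐ[volume] H') (k : P3 → ℝ) (p : P2) :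
    J R H k p = J R H' k p := by
  refine integral_congr_ae ?_
  have : ∀ᵐ z : P3, H z.2 = H' z.2 :=
    (Measure.quasiMeasurePreserving_snd (μ := (volume : Measure ℝ))
      (ν := (volume : Measure (ℝ × ℝ)))).ae h
  filter_upwards [this] with z hz
  rw [hz]

lemma limit {R : ℝ} (hR : 0 < R) {H : P2 → ℝ} (hH : Integrable H)
    {χ : P3 → ℝ} (hχ : Measurable χ) (hχ1 : ∀ z, |χ z| ≤ 1) {ρ : ℝ} (hρ : 0 < ρ)
    (hχ2 : ∀ z : P3, z.1 < 0 → ‖z‖ < ρ → χ z = 1) {ω : P2 → ℝ} (hω : Continuous ω)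
    (hωc : HasCompactSupport ω) :
    Tendsto (fun l : ℝ => ∫ p, ω p * J R H (fun z => χ z * eta (l ^ 2) z) p) (nhdsWithin 0 (Ioi 0))
      (nhds (R ^ 4 * M1 * ∫ p, ω p * H p)) ∧
    ∀ l : ℝ, 0 < l → Integrable fun p => ω p * J R H (fun z => χ z * eta (l ^ 2) z) p := by
  have e := hH.1.ae_eq_mk
  have hm := hH.1.stronglyMeasurable_mk.measurable
  have := limit_meas hR (hH.congr e) hm hχ hχ1 hρ hχ2 hω hωc
  simp only [← J_congr e] at this
  rw [integral_congr_ae (f := fun p => ω p * H p) (g := fun p => ω p * hH.1.mk H p)]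
  · exact this
  · filter_upwards [e] with p hp
    rw [hp]

/-! ### Conclusion -/

/-- A compact subset of the cylinder that contains the boxes around all points of both blocks. -/
def Kc (R x₀ v₀ : ℝ) : Set P2 :=
  (fun y : P3 => ((x₀ + v₀ * R ^ 2 * y.1 + R ^ 3 * y.2.1, v₀ + R * y.2.2) : P2)) ''
    (Icc (-(3 / 4)) 0 ×ˢ Icc (-(3 / 4)) (3 / 4) ×ˢ Icc (-(3 / 4)) (3 / 4))

lemma Kc_compact (R x₀ v₀ : ℝ) : IsCompact (Kc R x₀ v₀) :=
  (isCompact_Icc.prod (isCompact_Icc.prod isCompact_Icc)).image (by fun_prop)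

lemma Kc_subset {R : ℝ} (hR : 0 < R) (x₀ v₀ : ℝ) : Kc R x₀ v₀ ⊆
    {x : ℝ | ∃ t ∈ Set.Ioc (-R ^ 2) (0 : ℝ), |x - x₀ - v₀ * t| < R ^ 3}
      ×ˢ Set.Ioo (v₀ - R) (v₀ + R) := by
  rintro _ ⟨⟨t, x, v⟩, ⟨⟨a, b⟩, ⟨c, d⟩, ⟨e, f⟩⟩, rfl⟩
  simp only at a b c d e f
  have hR2 : 0 < R ^ 2 := by positivity
  have hR3 : 0 < R ^ 3 := by positivity
  refine ⟨⟨R ^ 2 * t, ⟨by nlinarith, by nlinarith⟩, ?_⟩, by simp only; nlinarith, by simp only; nlinarith⟩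
  simp only
  rw [show x₀ + v₀ * R ^ 2 * t + R ^ 3 * x - x₀ - v₀ * (R ^ 2 * t) = R ^ 3 * x by ring, abs_mul,
    abs_of_pos hR3]
  have : |x| ≤ 3 / 4 := abs_le.2 ⟨c, d⟩
  nlinarith

lemma Blk_Kc {R : ℝ} (hR : 0 < R) {x₀ v₀ s : ℝ} (hs : 0 ≤ s) (hs' : s ≤ 1 / 4) {p : P2}
    (hp : p ∈ Blk R x₀ v₀ s) : p ∈ Kc R x₀ v₀ := by
  obtain ⟨T, X, V, a1, a2, a3, a4, a5, a6⟩ := Blk_coord hR hp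
  have hr : r0 = 1 / 2 ^ 24 := rfl
  rw [abs_le] at a3 a4
  rw [hr] at a1 a3 a4
  norm_num at a1 a3 a4
  refine ⟨(T - s, X, V), ⟨⟨?_, ?_⟩, ⟨?_, ?_⟩, ⟨?_, ?_⟩⟩, ?_⟩
  · simp only; linarith
  · simp only; linarith
  · simp only; linarith
  · simp only; linarith
  · simp only; linarith
  · simp only; linarith
  · ext
    · exact a5.symm
    · exact a6.symm

lemma Blk_good {R : ℝ} (hR : 0 < R) {x₀ v₀ s : ℝ} (hs : 0 ≤ s) (hs' : s ≤ 1 / 4) {p : P2}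
    (hp : p ∈ Blk R x₀ v₀ s) : Good R (Kc R x₀ v₀) p := by
  obtain ⟨T, X, V, a1, a2, a3, a4, a5, a6⟩ := Blk_coord hR hp
  intro z hz
  have hz' : z = (sigHomeo R hR p).symm (Sig R p z) := ((sigHomeo R hR p).symm_apply_apply z).symm
  set y := Sig R p z with hy
  rw [hz']
  obtain ⟨t, x, v⟩ := y
  obtain ⟨⟨c1, c2⟩, ⟨c3, c4⟩, ⟨c5, c6⟩⟩ := hz
  have m1 : |V * t| ≤ 1 / 2 ^ 24 := by
    rw [abs_mul]
    have h2 : |t| ≤ 1 := by rw [abs_le]; simp only at c1 c2; constructor <;> linarith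
    calc |V| * |t| ≤ (1 / 2 ^ 24) * 1 := mul_le_mul a4 h2 (abs_nonneg _) (by norm_num)
      _ = _ := mul_one _
  have hr : r0 = 1 / 2 ^ 24 := rfl
  rw [abs_le] at a3 a4 m1
  rw [hr] at a1 a3 a4
  norm_num at a1 a3 a4 m1
  simp only at c1 c2 c3 c4 c5 c6
  refine ⟨(T - s + t, X + V * t + x, V + v), ⟨⟨?_, ?_⟩, ⟨?_, ?_⟩, ⟨?_, ?_⟩⟩, ?_⟩
  · simp only; linarith
  · simp only; linarith
  · simp only; linarith
  · simp only; linarith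
  · simp only; linarith
  · simp only; linarith
  · have e : (sigHomeo R hR p).symm (t, x, v) =
        (t, p.1 + R ^ 2 * p.2 * t + R ^ 3 * x, p.2 + R * v) := rfl
    rw [e]
    ext
    · simp only [a5, a6]
      ring
    · simp only [a6]
      ring

lemma Blk_open (R x₀ v₀ s : ℝ) : IsOpen (Blk R x₀ v₀ s) := by
  refine IsOpen.prod ?_ isOpen_Ioo
  have : Aslant r0 R x₀ v₀ s = ⋃ t ∈ Set.Ioc (-(r0 * R) ^ 2) (0 : ℝ),
      {x : ℝ | |x - x₀ - v₀ * (t - R ^ 2 * s)| < (r0 * R) ^ 3} := by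
    ext x
    simp only [Aslant, mem_ofPred_eq, mem_iUnion, exists_prop]
  rw [this]
  exact isOpen_biUnion fun t _ => isOpen_lt (by fun_prop) continuous_const

/-- A pointwise bound between the regularised values at the poles passes to weighted averages of
`H` as the regularisation is removed. -/
lemma avg_le {R : ℝ} (hR : 0 < R) {H : P2 → ℝ} (hH : Integrable H) (h0 : ∀ q, 0 ≤ H q) {c : ℝ}
    {P P' : Set P2}
    (hb : ∀ p ∈ P, ∀ p' ∈ P', ∀ ε, 0 < ε → ε ≤ 1 / 2 ^ 12 →
      J R H (fun z => cutm z * eta ε z) p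
        ≤ c * J R H (fun z => Box.indicator (fun _ => 1) z * eta ε z) p')
    {ω ω' : P2 → ℝ} (hω : Continuous ω) (hωc : HasCompactSupport ω) (hω0 : ∀ p, 0 ≤ ω p)
    (hω1 : ∫ p, ω p = 1) (hωP : ∀ p, ω p ≠ 0 → p ∈ P)
    (hω' : Continuous ω') (hωc' : HasCompactSupport ω') (hω0' : ∀ p, 0 ≤ ω' p)
    (hω1' : ∫ p, ω' p = 1) (hωP' : ∀ p, ω' p ≠ 0 → p ∈ P') :
    ∫ p, ω p * H p ≤ c * ∫ p, ω' p * H p := by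
  have hχ1 : ∀ z, |cutm z| ≤ 1 := by
    intro z
    unfold cutm
    split_ifs
    · rw [abs_of_nonneg cut.nonneg]; exact cut.le_one
    · simp
  have hχ2 : ∀ z : P3, z.1 < 0 → ‖z‖ < r0 / 2 → cutm z = 1 := by
    intro z hz hn
    unfold cutm
    rw [if_pos hz]
    exact cut.one_of_mem_closedBall (by rw [mem_closedBall_zero_iff]; exact hn.le)
  obtain ⟨L1, I1⟩ := limit hR hH cutm_adm.1 hχ1 (half_pos r0_pos) hχ2 hω hωc
  have hB := Adm.indicator Box_measurable subset_rfl
  have hχ1' : ∀ z, |Box.indicator (fun _ => (1 : ℝ)) z| ≤ 1 := by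
    intro z
    by_cases hz : z ∈ Box <;> simp [hz]
  have hχ2' : ∀ z : P3, z.1 < 0 → ‖z‖ < 1 / 4 → Box.indicator (fun _ => (1 : ℝ)) z = 1 := by
    intro z hz hn
    obtain ⟨a, b, d⟩ := norm_P3_le.1 hn.le
    exact Set.indicator_of_mem (show z ∈ Box from ⟨⟨(abs_le.1 a).1, hz.le⟩, abs_le.1 b, abs_le.1 d⟩) _
  obtain ⟨L2, I2⟩ := limit hR hH hB.1 hχ1' (by norm_num) hχ2' hω' hωc'
  have i1 : Integrable ω := hω.integrable_of_hasCompactSupport hωc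
  have i1' : Integrable ω' := hω'.integrable_of_hasCompactSupport hωc'
  have hpos : ∀ l : ℝ, 0 < l → ∀ p, 0 ≤ J R H (fun z => cutm z * eta (l ^ 2) z) p := by
    intro l hl p
    refine integral_nonneg fun z => mul_nonneg (h0 _) (mul_nonneg ?_ (eta_nonneg (by positivity) _))
    unfold cutm
    split_ifs
    · exact cut.nonneg
    · exact le_rfl
  have key : ∀ᶠ l : ℝ in nhdsWithin 0 (Ioi 0),
      ∫ p, ω p * J R H (fun z => cutm z * eta (l ^ 2) z) p
        ≤ c * ∫ p, ω' p * J R H (fun z => Box.indicator (fun _ => 1) z * eta (l ^ 2) z) p := by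
    have hsm : ∀ᶠ l : ℝ in nhdsWithin 0 (Ioi 0), l ^ 2 < 1 / 2 ^ 12 := by
      have : Tendsto (fun l : ℝ => l ^ 2) (nhds 0) (nhds (0 ^ 2)) := (continuous_pow 2).tendsto 0
      rw [zero_pow two_ne_zero] at this
      exact (this.mono_left nhdsWithin_le_nhds).eventually (gt_mem_nhds (by norm_num))
    filter_upwards [hsm, self_mem_nhdsWithin] with l hl hl0
    have hl0 : 0 < l := hl0
    -- integrate the bound in each of the two poles against its weight, both weights having mass one
    have s1 : ∀ p' ∈ P', ∫ p, ω p * J R H (fun z => cutm z * eta (l ^ 2) z) p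
        ≤ c * J R H (fun z => Box.indicator (fun _ => 1) z * eta (l ^ 2) z) p' := by
      intro p' hp'
      have := integral_mono (I1 l hl0) (i1.mul_const
        (c * J R H (fun z => Box.indicator (fun _ => 1) z * eta (l ^ 2) z) p')) fun p => ?_
      · rw [integral_mul_const, hω1, one_mul] at this
        exact this
      · by_cases hp : ω p = 0
        · simp [hp]
        · exact mul_le_mul_of_nonneg_left (hb p (hωP p hp) p' hp' _ (by positivity) hl.le) (hω0 p)
    have := integral_mono (i1'.mul_const (∫ p, ω p * J R H (fun z => cutm z * eta (l ^ 2) z) p))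
      ((I2 l hl0).const_mul c) fun p' => ?_
    · rw [integral_mul_const, hω1', one_mul, integral_const_mul] at this
      exact this
    · by_cases hp : ω' p' = 0
      · simp [hp]
      · have := mul_le_mul_of_nonneg_left (s1 p' (hωP' p' hp)) (hω0' p')
        simp only
        linarith
  have := le_of_tendsto_of_tendsto L1 (L2.const_mul c) key
  have hM : 0 < R ^ 4 * M1 := mul_pos (by positivity) M1_pos
  refine le_of_mul_le_mul_left ?_ hM
  linarith

/-- Averages against shrinking bumps recover the values almost everywhere. -/
lemma pointwise_le {R : ℝ} (hR : 0 < R) {H : P2 → ℝ} (hH : Integrable H) (h0 : ∀ q, 0 ≤ H q) {c : ℝ}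
    {P P' : Set P2} (hP : IsOpen P) (hP' : IsOpen P')
    (hb : ∀ p ∈ P, ∀ p' ∈ P', ∀ ε, 0 < ε → ε ≤ 1 / 2 ^ 12 →
      J R H (fun z => cutm z * eta ε z) p
        ≤ c * J R H (fun z => Box.indicator (fun _ => 1) z * eta ε z) p') :
    ∃ A : Set P2, (∀ᵐ p, p ∈ A) ∧ ∀ p ∈ P ∩ A, ∀ p' ∈ P' ∩ A, H p ≤ c * H p' := by
  have i2 : ((volume : Measure P2)).IsAddHaarMeasure := Measure.prod.instIsAddHaarMeasure _ _
  set φ : ℕ → ContDiffBump (0 : P2) := fun n =>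
    ⟨1 / ((n : ℝ) + 1), 2 * (1 / ((n : ℝ) + 1)), by positivity,
      lt_mul_of_one_lt_left (by positivity) (by norm_num)⟩ with hφ
  have hout : Tendsto (fun n => (φ n).rOut) atTop (nhds 0) := by
    have := (tendsto_one_div_add_atTop_nhds_zero_nat (𝕜 := ℝ)).const_mul 2
    rw [mul_zero] at this
    exact this
  have hae := ContDiffBump.ae_convolution_tendsto_right_of_locallyIntegrable (μ := (volume : Measure P2))
    (φ := φ) (l := atTop) (K := 2) (g := H) hout (Eventually.of_forall fun n => le_rfl)
    hH.locallyIntegrable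
  refine ⟨_, hae, ?_⟩
  set W : ℕ → P2 → P2 → ℝ := fun n p q => (φ n).normed volume (p - q) with hW
  have hconv : ∀ n p, convolution ((φ n).normed volume) H (ContinuousLinearMap.lsmul ℝ ℝ) volume p
      = ∫ q, W n p q * H q := by
    intro n p
    rw [convolution_eq_swap]
    rfl
  have w1 : ∀ n p, Continuous (W n p) := fun n p =>
    ((φ n).continuous_normed).comp (by fun_prop)
  have w2 : ∀ n p, HasCompactSupport (W n p) := fun n p =>
    ((φ n).hasCompactSupport_normed).comp_homeomorph (Homeomorph.subLeft p)
  have w3 : ∀ n p q, 0 ≤ W n p q := fun n p q => (φ n).nonneg_normed _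
  have w4 : ∀ n p, ∫ q, W n p q = 1 := by
    intro n p
    rw [← (φ n).integral_normed (μ := (volume : Measure P2))]
    exact integral_sub_left_eq_self (fun q => (φ n).normed volume q) volume p
  have w5 : ∀ O : Set P2, IsOpen O → ∀ p ∈ O, ∀ᶠ n in atTop, ∀ q, W n p q ≠ 0 → q ∈ O := by
    intro O hO p hp
    obtain ⟨r, hr, hrO⟩ := Metric.isOpen_iff.1 hO p hp
    filter_upwards [hout.eventually (gt_mem_nhds hr)] with n hn q hq
    apply hrO
    have : p - q ∈ Function.support ((φ n).normed volume) := hq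
    rw [(φ n).support_normed_eq, mem_ball_zero_iff] at this
    rw [Metric.mem_ball, dist_comm, dist_eq_norm]
    exact this.trans hn
  rintro p ⟨hp, hpA⟩ p' ⟨hp', hpA'⟩
  have hpA : Tendsto (fun n => convolution ((φ n).normed volume) H (ContinuousLinearMap.lsmul ℝ ℝ)
    volume p) atTop (nhds (H p)) := hpA
  have hpA' : Tendsto (fun n => convolution ((φ n).normed volume) H (ContinuousLinearMap.lsmul ℝ ℝ)
    volume p') atTop (nhds (H p')) := hpA'
  refine le_of_tendsto_of_tendsto hpA (hpA'.const_mul c) ?_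
  filter_upwards [w5 P hP p hp, w5 P' hP' p' hp'] with n hn hn'
  rw [hconv, hconv]
  exact avg_le hR hH h0 hb (w1 n p) (w2 n p) (w3 n p) (w4 n p) hn (w1 n p') (w2 n p') (w3 n p')
    (w4 n p') hn'

theorem statement_10 :
    ∃ θ γ c : ℝ, 0 < θ ∧ θ < 1/2 ∧ 0 < γ ∧ γ < 1/2 ∧ 1 ≤ c ∧
      ∀ Q : Set P2, IsOpen Q →
        ∀ h hv : P2 → ℝ, IsWeakSolOpen Q h hv → (∀ p ∈ Q, 0 ≤ h p) →
          ∀ R : ℝ, 0 < R → R ≤ 2 →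
            ∀ x₀ v₀ : ℝ,
              ({x : ℝ | ∃ t ∈ Set.Ioc (-R ^ 2) (0:ℝ), |x - x₀ - v₀ * t| < R ^ 3}
                  ×ˢ Set.Ioo (v₀ - R) (v₀ + R)) ⊆ Q →
              essSup (fun p : P2 => ENNReal.ofReal (h p))
                  (volume.restrict
                    (Aslant θ R x₀ v₀ γ ×ˢ Set.Ioo (v₀ - θ * R) (v₀ + θ * R)))
                ≤ ENNReal.ofReal c *
                  essInf (fun p : P2 => ENNReal.ofReal (h p))
                    (volume.restrict
                      (Aslant θ R x₀ v₀ 0 ×ˢ Set.Ioo (v₀ - θ * R) (v₀ + θ * R))) := by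
  obtain ⟨C, hC, hup⟩ := upper
  refine ⟨r0, 1 / 2 ^ 10, 2 * C + 1, r0_pos, by unfold r0; norm_num, by norm_num, by norm_num,
    by linarith, ?_⟩
  intro Q hQ h hv hs h0 R hR _ x₀ v₀ hsub
  change essSup _ (volume.restrict (Blk R x₀ v₀ (1 / 2 ^ 10))) ≤ _ * essInf _
    (volume.restrict (Blk R x₀ v₀ 0))
  -- `h` is only locally integrable in `Q`, so it is replaced by its restriction to a compact set
  -- containing everything that the boxes around points of the two blocks can see
  set K := Kc R x₀ v₀ with hKdef
  have hK : IsCompact K := Kc_compact R x₀ v₀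
  have hKQ : K ⊆ Q := (Kc_subset hR x₀ v₀).trans hsub
  have hi : IntegrableOn h K := integrableOn_of_sol hs hQ h0 hK hKQ
  set H := K.indicator h with hHdef
  have hH : Integrable H := (integrable_indicator_iff hK.measurableSet).2 hi
  have hH0 : ∀ q, 0 ≤ H q := Set.indicator_nonneg fun q hq => h0 q (hKQ hq)
  have hsol : ∀ p, Good R K p → Sol R H p := fun p hp φ h1 h2 =>
    lift_eq hs hQ hK hKQ hi hR hp h1 h2
  have hb : ∀ p ∈ Blk R x₀ v₀ (1 / 2 ^ 10), ∀ p' ∈ Blk R x₀ v₀ 0, ∀ ε, 0 < ε → ε ≤ 1 / 2 ^ 12 →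
      J R H (fun z => cutm z * eta ε z) p
        ≤ (2 * C + 1) * J R H (fun z => Box.indicator (fun _ => 1) z * eta ε z) p' := by
    intro p hp p' hp' ε hε hε'
    have k1 := hup R H hH hH0 p (hsol p (Blk_good hR (by norm_num) (by norm_num) hp)) ε hε
    have k2 := compare hR hH hH0 hp hp'
    have k3 := lower hH hH0 (hsol p' (Blk_good hR le_rfl (by norm_num) hp')) hε hε'
    have k4 : 0 ≤ J R H (fun z => Box.indicator (fun _ => 1) z * eta ε z) p' :=
      integral_nonneg fun z => mul_nonneg (hH0 _)
        (mul_nonneg (Set.indicator_nonneg (fun _ _ => by norm_num) _) (eta_nonneg hε _))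
    have k5 := mul_le_mul_of_nonneg_left (k2.trans k3) hC
    linarith
  obtain ⟨A, hA, hle⟩ := pointwise_le hR hH hH0 (Blk_open R x₀ v₀ _) (Blk_open R x₀ v₀ _) hb
  have hc0 : 0 < 2 * C + 1 := by linarith
  have hc1 : ENNReal.ofReal (2 * C + 1) ≠ 0 := by simpa using hc0
  refine essSup_le_of_ae_le _ ?_
  filter_upwards [ae_restrict_mem (Blk_open R x₀ v₀ (1 / 2 ^ 10)).measurableSet,
    ae_restrict_of_ae hA] with p hp hpA
  rw [mul_comm, ← ENNReal.div_le_iff hc1 ENNReal.ofReal_ne_top]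
  refine le_essInf_of_ae_le _ ?_
  filter_upwards [ae_restrict_mem (Blk_open R x₀ v₀ 0).measurableSet,
    ae_restrict_of_ae hA] with p' hp' hpA'
  have := hle p ⟨hp, hpA⟩ p' ⟨hp', hpA'⟩
  rw [hHdef, Set.indicator_of_mem (Blk_Kc hR (by norm_num) (by norm_num) hp),
    Set.indicator_of_mem (Blk_Kc hR le_rfl (by norm_num) hp')] at this
  rw [ENNReal.div_le_iff hc1 ENNReal.ofReal_ne_top, mul_comm, ← ENNReal.ofReal_mul hc0.le]
  exact ENNReal.ofReal_le_ofReal this
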